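/- arXiv:2208.14773 — 7 statements merged into one kernel-verified Lean document; each statement's English description precedes it below -/
import Mathlib

section
/- Let q be a prime power, k ≥ 1, and n = 2k+1. Let B = B_0 ∪ B_{n-1} be a blocking set with respect to k-spaces in PG(2k+1,q) consisting of points and hyperplanes, and let ρ be a (k-1)-space containing no point of B_0. If the number N of hyperplanes of B_{n-1} containing ρ satisfies q^k·N = (q+1)·q^k - |B_0|, then every k-space containing ρ contains at most one point of B_0, and q^k divides |B_0|. -/
/-!
Project from `ρ`. The points of `B0` become points of the quotient geometry, the hyperplanes of `Bn`
through `ρ` become hyperplanes, and the blocking property says that together they cover every point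
of the quotient. Covering a space of vector dimension `m + 2` by `N` hyperplanes and `b` points
requires `(q + 1) * q ^ m ≤ q ^ m * N + b`: count the vectors off one of the hyperplanes (the
nonzero vectors, if `N = 0`), of which every other hyperplane covers at most `(q - 1) * q ^ m` and
every point at most `q - 1`. Under the equality hypothesis the projection therefore cannot identify
two points of `B0`, which is what two points of `B0` in a common `k`-space through `ρ` would force.
-/

open Module

theorem ncard_biUnion_le_ncard_mul {α ι : Type*} {s : Set ι} (hs : s.Finite) {f : ι → Set α} {c : ℕ}
    (hf : ∀ i ∈ s, (f i).ncard ≤ c) : (⋃ i ∈ s, f i).ncard ≤ s.ncard * c := by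
  lift s to Finset ι using hs
  rw [Set.ncard_coe_finset]
  exact (s.set_ncard_biUnion_le f).trans (s.sum_le_card_nsmul _ c hf)

theorem finrank_map_add_finrank_inf_ker {K V W : Type*} [DivisionRing K] [AddCommGroup V]
    [Module K V] [AddCommGroup W] [Module K W] (f : V →ₗ[K] W) (S : Submodule K V)
    [FiniteDimensional K S] :
    finrank K (S.map f) + finrank K (S ⊓ LinearMap.ker f : Submodule K V) = finrank K S := by
  rw [← LinearMap.finrank_range_add_finrank_ker (f.domRestrict S), LinearMap.range_domRestrict,
    LinearMap.ker_domRestrict, ← Submodule.finrank_map_subtype_eq S, Submodule.map_comap_subtype]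

section Projection

variable {K V : Type*} [DivisionRing K] [AddCommGroup V] [Module K V] [FiniteDimensional K V]
  {ρ S T : Submodule K V}

theorem finrank_map_mkQ_add_finrank (h : ρ ≤ S) :
    finrank K (S.map ρ.mkQ) + finrank K ρ = finrank K S := by
  rw [← finrank_map_add_finrank_inf_ker ρ.mkQ S, Submodule.ker_mkQ, inf_eq_right.mpr h]

theorem finrank_map_mkQ_of_finrank_eq_one (hS : finrank K S = 1) (h : ¬ S ≤ ρ) :
    finrank K (S.map ρ.mkQ) = 1 := by
  have hdisj : S ⊓ ρ = ⊥ :=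
    ((Submodule.isAtom_iff_finrank_eq_one.mpr hS).not_le_iff_disjoint.mp h).eq_bot
  rw [← hS, ← finrank_map_add_finrank_inf_ker ρ.mkQ S, Submodule.ker_mkQ, hdisj, finrank_bot,
    add_zero]

theorem finrank_comap_mkQ (T : Submodule K (V ⧸ ρ)) :
    finrank K (T.comap ρ.mkQ) = finrank K T + finrank K ρ := by
  rw [← finrank_map_mkQ_add_finrank (ρ.le_comap_mkQ T),
    Submodule.map_comap_eq_of_surjective ρ.mkQ_surjective]

theorem map_mkQ_eq_of_le (hS : finrank K S = 1) (hSρ : ¬ S ≤ ρ) (hρT : ρ ≤ T)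
    (hT : finrank K T = finrank K ρ + 1) (hST : S ≤ T) : S.map ρ.mkQ = T.map ρ.mkQ := by
  refine Submodule.eq_of_le_of_finrank_eq (Submodule.map_mono hST) ?_
  have hmapS := finrank_map_mkQ_of_finrank_eq_one hS hSρ
  have hmapT := finrank_map_mkQ_add_finrank hρT
  lia

theorem exists_mem_map_mkQ_of_blocking {P ℋ : Set (Submodule K V)}
    (hP : ∀ p ∈ P, finrank K p = 1) (hPρ : ∀ p ∈ P, ¬ p ≤ ρ)
    (hblock : ∀ W : Submodule K V, ρ ≤ W → finrank K W = finrank K ρ + 1 →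
      (∃ p ∈ P, p ≤ W) ∨ ∃ H ∈ ℋ, W ≤ H) {v : V ⧸ ρ} (hv : v ≠ 0) :
    (∃ p ∈ Submodule.map ρ.mkQ '' P, v ∈ p) ∨ ∃ H ∈ Submodule.map ρ.mkQ '' ℋ, v ∈ H := by
  set W := (K ∙ v).comap ρ.mkQ
  have hρW : ρ ≤ W := ρ.le_comap_mkQ _
  have hW : finrank K W = finrank K ρ + 1 := by
    rw [finrank_comap_mkQ, finrank_span_singleton hv, add_comm]
  have hvW : v ∈ W.map ρ.mkQ := by
    rw [Submodule.map_comap_eq_of_surjective ρ.mkQ_surjective]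
    exact Submodule.mem_span_singleton_self v
  rw [Set.exists_mem_image, Set.exists_mem_image]
  refine (hblock W hρW hW).imp (fun ⟨p, hp, hpW⟩ ↦ ⟨p, hp, ?_⟩) fun ⟨H, hH, hWH⟩ ↦
    ⟨H, hH, Submodule.map_mono hWH hvW⟩
  rwa [map_mkQ_eq_of_le (hP p hp) (hPρ p hp) hρW hW hpW]

end Projection

theorem sub_one_mul_add_one_mul_pow {q : ℕ} (hq : 1 ≤ q) (m : ℕ) :
    (q - 1) * ((q + 1) * q ^ m) + q ^ m = q ^ (m + 2) := by
  obtain ⟨r, rfl⟩ := Nat.exists_eq_add_of_le' hq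
  rw [Nat.add_sub_cancel]
  ring

section Cover

variable {F V : Type*} [Field F] [Fintype F] [AddCommGroup V] [Module F V] [FiniteDimensional F V]

local notation "q" => Fintype.card F

theorem ncard_submodule (A : Submodule F V) : (A : Set V).ncard = q ^ finrank F A := by
  rw [← Nat.card_coe_set_eq, ← Nat.card_eq_fintype_card]
  exact Module.natCard_eq_pow_finrank (K := F) (V := A)

theorem ncard_sdiff_le {A U : Submodule F V} {a : ℕ} (hA : finrank F A = a + 1)
    (hAU : a ≤ finrank F (A ⊓ U : Submodule F V)) :
    ((A : Set V) \ U).ncard ≤ (q - 1) * q ^ a := by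
  have : Finite V := Module.finite_of_finite F
  have hsplit := Set.ncard_inter_add_ncard_sdiff_eq_ncard (A : Set V) U
  rw [← Submodule.coe_inf, ncard_submodule, ncard_submodule, hA, pow_succ'] at hsplit
  have hpow : q ^ a ≤ q ^ finrank F (A ⊓ U : Submodule F V) :=
    Nat.pow_le_pow_right Fintype.card_pos hAU
  rw [Nat.sub_mul]
  lia

variable {m : ℕ} {P ℋ : Set (Submodule F V)}

theorem pow_finrank_le_of_cover {U : Submodule F V} (hP : ∀ p ∈ P, finrank F p = 1)
    (hℋ : ∀ H ∈ ℋ, finrank F H = m + 1)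
    (hℋU : ∀ H ∈ ℋ, m ≤ finrank F (H ⊓ U : Submodule F V))
    (hcover : ∀ v ∉ U, (∃ p ∈ P, v ∈ p) ∨ ∃ H ∈ ℋ, v ∈ H) :
    q ^ finrank F V ≤ q ^ finrank F U + (q - 1) * (q ^ m * ℋ.ncard + P.ncard) := by
  have : Finite V := Module.finite_of_finite F
  have huniv : Set.univ ⊆
      (U : Set V) ∪ ((⋃ H ∈ ℋ, (H : Set V) \ U) ∪ ⋃ p ∈ P, (p : Set V) \ U) := by
    intro v _
    by_cases hv : v ∈ U
    · exact Or.inl hv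
    · simp only [Set.mem_union, Set.mem_iUnion₂]
      exact Or.inr <| (hcover v hv).symm.imp (fun ⟨H, hH, hvH⟩ ↦ ⟨H, hH, hvH, hv⟩)
        fun ⟨p, hp, hvp⟩ ↦ ⟨p, hp, hvp, hv⟩
  have hℋ_card := ncard_biUnion_le_ncard_mul ℋ.toFinite fun H hH ↦
    ncard_sdiff_le (hℋ H hH) (hℋU H hH)
  have hP_card := ncard_biUnion_le_ncard_mul P.toFinite fun p hp ↦
    ncard_sdiff_le (U := U) (a := 0) (hP p hp) (Nat.zero_le _)
  calc q ^ finrank F V = (Set.univ : Set V).ncard := by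
        rw [← finrank_top, ← ncard_submodule, Submodule.top_coe]
    _ ≤ q ^ finrank F U + (ℋ.ncard * ((q - 1) * q ^ m) + P.ncard * ((q - 1) * q ^ 0)) := by
        rw [← ncard_submodule]
        refine (Set.ncard_le_ncard huniv).trans ((Set.ncard_union_le _ _).trans ?_)
        gcongr
        exact (Set.ncard_union_le _ _).trans (add_le_add hℋ_card hP_card)
    _ = q ^ finrank F U + (q - 1) * (q ^ m * ℋ.ncard + P.ncard) := by ring

theorem card_add_one_mul_pow_le_of_point_cover (hV : finrank F V = m + 2)
    (hP : ∀ p ∈ P, finrank F p = 1) (hcover : ∀ v ≠ 0, ∃ p ∈ P, v ∈ p) :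
    (q + 1) * q ^ m ≤ P.ncard := by
  have hbound := pow_finrank_le_of_cover (U := ⊥) (ℋ := ∅) (m := m) hP (by simp) (by simp)
    fun v hv ↦ Or.inl (hcover v hv)
  rw [hV, finrank_bot, Set.ncard_empty, mul_zero, zero_add] at hbound
  have hsq := sub_one_mul_add_one_mul_pow (Fintype.card_pos (α := F)) m
  have hpow : 0 < q ^ m := pow_pos Fintype.card_pos m
  refine Nat.le_of_mul_le_mul_left (c := q - 1) ?_ (Nat.sub_pos_of_lt Fintype.one_lt_card)
  lia

theorem card_add_one_mul_pow_le_of_cover_of_nonempty (hV : finrank F V = m + 2)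
    (hP : ∀ p ∈ P, finrank F p = 1) (hℋ : ∀ H ∈ ℋ, finrank F H = m + 1) (hne : ℋ.Nonempty)
    (hcover : ∀ v ≠ 0, (∃ p ∈ P, v ∈ p) ∨ ∃ H ∈ ℋ, v ∈ H) :
    (q + 1) * q ^ m ≤ q ^ m * ℋ.ncard + P.ncard := by
  have : Finite V := Module.finite_of_finite F
  obtain ⟨H₀, hH₀⟩ := hne
  have hinf : ∀ H ∈ ℋ \ {H₀}, m ≤ finrank F (H ⊓ H₀ : Submodule F V) := fun H hH ↦ by
    have hdim := Submodule.finrank_sup_add_finrank_inf_eq H H₀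
    have hsup := (H ⊔ H₀).finrank_le
    rw [hℋ H hH.1, hℋ H₀ hH₀] at hdim
    lia
  have hcover' : ∀ v ∉ H₀, (∃ p ∈ P, v ∈ p) ∨ ∃ H ∈ ℋ \ {H₀}, v ∈ H := fun v hv ↦
    (hcover v fun h ↦ hv (h ▸ H₀.zero_mem)).imp_right fun ⟨H, hH, hvH⟩ ↦
      ⟨H, ⟨hH, fun h ↦ hv (h ▸ hvH)⟩, hvH⟩
  have hbound := pow_finrank_le_of_cover hP (fun H hH ↦ hℋ H hH.1) hinf hcover'
  rw [hV, hℋ H₀ hH₀] at hbound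
  have hsq := sub_one_mul_add_one_mul_pow (Fintype.card_pos (α := F)) m
  have hpow : (q - 1) * q ^ m + q ^ m = q ^ (m + 1) := by
    rw [← Nat.succ_mul, Nat.succ_eq_add_one, Nat.sub_add_cancel Fintype.card_pos, pow_succ']
  rw [← Set.ncard_sdiff_singleton_add_one hH₀]
  refine Nat.le_of_mul_le_mul_left (c := q - 1) ?_ (Nat.sub_pos_of_lt Fintype.one_lt_card)
  linarith

theorem card_add_one_mul_pow_le_of_cover (hV : finrank F V = m + 2) (hP : ∀ p ∈ P, finrank F p = 1)
    (hℋ : ∀ H ∈ ℋ, finrank F H = m + 1)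
    (hcover : ∀ v ≠ 0, (∃ p ∈ P, v ∈ p) ∨ ∃ H ∈ ℋ, v ∈ H) :
    (q + 1) * q ^ m ≤ q ^ m * ℋ.ncard + P.ncard := by
  obtain rfl | hne := ℋ.eq_empty_or_nonempty
  · simpa using card_add_one_mul_pow_le_of_point_cover hV hP (by simpa using hcover)
  · exact card_add_one_mul_pow_le_of_cover_of_nonempty hV hP hℋ hne hcover

theorem card_add_one_mul_pow_le_of_blocking {ρ : Submodule F V}
    (hV : finrank F V = finrank F ρ + m + 2) (hP : ∀ p ∈ P, finrank F p = 1)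
    (hPρ : ∀ p ∈ P, ¬ p ≤ ρ) (hℋ : ∀ H ∈ ℋ, finrank F H = finrank F ρ + m + 1)
    (hρℋ : ∀ H ∈ ℋ, ρ ≤ H)
    (hblock : ∀ W : Submodule F V, ρ ≤ W → finrank F W = finrank F ρ + 1 →
      (∃ p ∈ P, p ≤ W) ∨ ∃ H ∈ ℋ, W ≤ H) :
    (q + 1) * q ^ m ≤ q ^ m * ℋ.ncard + (Submodule.map ρ.mkQ '' P).ncard := by
  have : Finite V := Module.finite_of_finite F
  have hquot : finrank F (V ⧸ ρ) = m + 2 := by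
    have hdim := ρ.finrank_quotient_add_finrank
    lia
  have hP' : ∀ p ∈ Submodule.map ρ.mkQ '' P, finrank F p = 1 :=
    Set.forall_mem_image.mpr fun p hp ↦ finrank_map_mkQ_of_finrank_eq_one (hP p hp) (hPρ p hp)
  have hℋ' : ∀ H ∈ Submodule.map ρ.mkQ '' ℋ, finrank F H = m + 1 :=
    Set.forall_mem_image.mpr fun H hH ↦ by
      have hdim := finrank_map_mkQ_add_finrank (hρℋ H hH)
      rw [hℋ H hH] at hdim
      lia
  calc (q + 1) * q ^ m
      ≤ q ^ m * (Submodule.map ρ.mkQ '' ℋ).ncard + (Submodule.map ρ.mkQ '' P).ncard :=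
        card_add_one_mul_pow_le_of_cover hquot hP' hℋ' fun _ hv ↦
          exists_mem_map_mkQ_of_blocking hP hPρ hblock hv
    _ ≤ q ^ m * ℋ.ncard + (Submodule.map ρ.mkQ '' P).ncard := by
        gcongr
        exact Set.ncard_image_le

theorem stmt_8_general {k : ℕ} (hV : finrank F V = k + m + 2) (B0 Bn : Set (Submodule F V))
    (hB0 : ∀ p ∈ B0, finrank F p = 1) (hBn : ∀ H ∈ Bn, finrank F H = k + m + 1)
    (ρ : Submodule F V) (hρ : finrank F ρ = k) (hρB0 : ∀ p ∈ B0, ¬ p ≤ ρ)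
    (hblock : ∀ W : Submodule F V, ρ ≤ W → finrank F W = k + 1 →
      (∃ p ∈ B0, p ≤ W) ∨ ∃ H ∈ Bn, W ≤ H)
    (heq : q ^ m * {H ∈ Bn | ρ ≤ H}.ncard + B0.ncard = (q + 1) * q ^ m) :
    (∀ W : Submodule F V, finrank F W = k + 1 → ρ ≤ W → {p ∈ B0 | p ≤ W}.ncard ≤ 1) ∧
      q ^ m ∣ B0.ncard := by
  have : Finite V := Module.finite_of_finite F
  subst hρ
  have hbound := card_add_one_mul_pow_le_of_blocking (ℋ := {H ∈ Bn | ρ ≤ H}) hV hB0 hρB0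
    (fun H hH ↦ hBn H hH.1) (fun H hH ↦ hH.2) fun W hρW hW ↦
      (hblock W hρW hW).imp_right fun ⟨H, hH, hWH⟩ ↦ ⟨H, ⟨hH, hρW.trans hWH⟩, hWH⟩
  have hinj : Set.InjOn (Submodule.map ρ.mkQ) B0 :=
    Set.injOn_of_ncard_image_eq (le_antisymm Set.ncard_image_le (by lia))
  refine ⟨fun W hW hρW ↦ ?_, ?_⟩
  · have hmap : ∀ p ∈ {p ∈ B0 | p ≤ W}, p.map ρ.mkQ = W.map ρ.mkQ := fun p hp ↦
      map_mkQ_eq_of_le (hB0 p hp.1) (hρB0 p hp.1) hρW hW hp.2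
    exact Set.ncard_le_one_iff_subsingleton.mpr fun p hp p' hp' ↦
      hinj hp.1 hp'.1 ((hmap p hp).trans (hmap p' hp').symm)
  · exact (Nat.dvd_add_right (dvd_mul_right _ _)).mp (heq ▸ dvd_mul_left _ _)

end Cover

/-- Let `B = B0 ∪ Bn` be a blocking set of points and hyperplanes
with respect to `k`-spaces in `PG(2k+1,q)` and let `ρ` be a `(k-1)`-space containing
no point of `B0`.  If the number `N` of hyperplanes of `Bn` through `ρ` satisfies
`q^k·N = (q+1)·q^k - |B0|` (i.e. `q^k·N + |B0| = (q+1)·q^k`), then every `k`-space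
through `ρ` contains at most one point of `B0`, and `q^k` divides `|B0|`. -/
theorem stmt_8 {F : Type} [Field F] [Fintype F] (k : ℕ) (hk : 1 ≤ k)
    (B0 Bn : Set (Submodule F (Fin (2 * k + 2) → F)))
    (hB0 : ∀ p ∈ B0, Module.finrank F p = 1)
    (hBn : ∀ H ∈ Bn, Module.finrank F H = 2 * k + 1)
    (hblock : ∀ W : Submodule F (Fin (2 * k + 2) → F), Module.finrank F W = k + 1 →
      (∃ p ∈ B0, p ≤ W) ∨ (∃ H ∈ Bn, W ≤ H))
    (ρ : Submodule F (Fin (2 * k + 2) → F)) (hρ : Module.finrank F ρ = k)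
    (hρB0 : ∀ p ∈ B0, ¬ p ≤ ρ)
    (heq : (Fintype.card F) ^ k * {H ∈ Bn | ρ ≤ H}.ncard + B0.ncard =
      (Fintype.card F + 1) * (Fintype.card F) ^ k) :
    (∀ W : Submodule F (Fin (2 * k + 2) → F), Module.finrank F W = k + 1 → ρ ≤ W →
      {p ∈ B0 | p ≤ W}.ncard ≤ 1) ∧
    (Fintype.card F) ^ k ∣ B0.ncard :=
  stmt_8_general (by rw [Module.finrank_fin_fun]; ring) B0 Bn hB0
    (fun H hH ↦ (hBn H hH).trans (by ring)) ρ hρ hρB0 (fun W _ ↦ hblock W) heq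
end

section
/- Let q be a prime power, k ≥ 1, and n = 2k+1. Let B = B_0 ∪ B_{n-1} be a blocking set with respect to k-spaces in PG(2k+1,q) consisting of points and hyperplanes with |B| = (q+1)·q^k, and let ρ be a (k-1)-space containing no point of B_0. If there exists a k-space through ρ that contains exactly one point of B_0 and is contained in no hyperplane of B_{n-1}, then every k-space containing ρ contains at most one point of B_0. -/
/-!
Let `m` be the number of hyperplanes of `Bₙ₋₁` through a `(k-1)`-space `σ` missing `B₀`. The
`k`-spaces through `σ` that lie in none of them each contain a point of `B₀`, and there are at
least `(q + 1 - m) q ^ k` such spaces. Sum this over the `q ^ k` complements `σ` of the point of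
`B₀` in the given `k`-space `W₀`. A hyperplane not containing `W₀` contains at most one of them, so
the numbers `m` add up to at most `|Bₙ₋₁|`. As `|B₀| + |Bₙ₋₁| = (q + 1) q ^ k`, the number of
`k`-spaces through `σ` meeting `B₀` is therefore at least `|B₀|` on average over `σ`. It never
exceeds `|B₀|`, so it always equals `|B₀|`: distinct points of `B₀` span distinct `k`-spaces with
each `σ`, in particular with `ρ`.

The argument works in `PG(k + j + 1, q)` when points and hyperplanes are weighted by `q ^ k` and
`q ^ j` respectively.
-/

open Module Finset

section Complements

variable {R E : Type*}

/-- The complements of `p` form a torsor under `q →ₗ[R] p`, for any complement `q` as origin. -/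
noncomputable def isComplEquivLinearMap [Ring R] [AddCommGroup E] [Module R E]
    {p q : Submodule R E} (h : IsCompl p q) : {σ : Submodule R E // IsCompl p σ} ≃ (q →ₗ[R] p) :=
  p.isComplEquivProj.trans
    { toFun f := f.1.domRestrict q
      invFun g := ⟨LinearMap.ofIsCompl h LinearMap.id g, LinearMap.ofIsCompl_apply_left h⟩
      left_inv f := Subtype.ext <| LinearMap.ofIsCompl_eq h (fun x ↦ (f.2 x).symm) fun _ ↦ rfl
      right_inv _ := LinearMap.ext <| LinearMap.ofIsCompl_apply_right h }

theorem natCard_isCompl [Field R] [AddCommGroup E] [Module R E] [Module.Finite R E]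
    {p q : Submodule R E} (h : IsCompl p q) :
    Nat.card {σ // IsCompl p σ} = Nat.card R ^ (finrank R q * finrank R p) := by
  rw [Nat.card_congr (isComplEquivLinearMap h), natCard_eq_pow_finrank (K := R), finrank_linearMap]

theorem ncard_disjoint_sup_eq [Field R] [AddCommGroup E] [Module R E] [Module.Finite R E]
    {p q : Submodule R E} (h : Disjoint p q) :
    {σ | Disjoint p σ ∧ p ⊔ σ = p ⊔ q}.ncard = Nat.card R ^ (finrank R q * finrank R p) := by
  let e := (p ⊔ q).mapIic
  let p' : Set.Iic (p ⊔ q) := ⟨p, le_sup_left (b := q)⟩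
  let q' : Set.Iic (p ⊔ q) := ⟨q, le_sup_right (a := p)⟩
  have h_compl : IsCompl (e.symm p') (e.symm q') :=
    e.symm.isCompl_iff.1 (Set.Iic.isCompl_iff.2 ⟨h, rfl⟩)
  have finrank_symm (x : Set.Iic (p ⊔ q)) : finrank R (e.symm x) = finrank R x.1 := by
    rw [← Submodule.finrank_map_subtype_eq, ← Submodule.coe_mapIic_apply, OrderIso.apply_symm_apply]
  have h_image : {σ | Disjoint p σ ∧ p ⊔ σ = p ⊔ q} =
      (fun τ ↦ (e τ : Submodule R E)) '' {τ | IsCompl (e.symm p') τ} := by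
    have mem_iff (x : Set.Iic (p ⊔ q)) :
        IsCompl (e.symm p') (e.symm x) ↔ Disjoint p x.1 ∧ p ⊔ x = p ⊔ q :=
      e.symm.isCompl_iff.symm.trans Set.Iic.isCompl_iff
    ext σ
    constructor
    · intro hσ
      let σ' : Set.Iic (p ⊔ q) := ⟨σ, hσ.2 ▸ le_sup_right (a := p)⟩
      exact ⟨e.symm σ', (mem_iff σ').2 hσ, by simp [σ']⟩
    · rintro ⟨τ, hτ, rfl⟩
      exact (mem_iff (e τ)).1 (by simpa using hτ)
  have e_injective : Function.Injective fun τ ↦ (e τ : Submodule R E) :=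
    Subtype.val_injective.comp e.injective
  rw [h_image, Set.ncard_image_of_injective _ e_injective, ← finrank_symm p', ← finrank_symm q']
  exact natCard_isCompl h_compl

end Complements

variable {F V : Type*} [Field F] [AddCommGroup V] [Module F V] [Module.Finite F V]

theorem finrank_sup_of_finrank_eq_one {p ρ : Submodule F V} (hp : finrank F p = 1)
    (h : ¬ p ≤ ρ) : finrank F ↥(p ⊔ ρ) = finrank F ρ + 1 := by
  have := Submodule.finrank_sup_add_finrank_inf_eq p ρ
  have h_disj := (Submodule.isAtom_iff_finrank_eq_one.2 hp).not_le_iff_disjoint.1 h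
  rw [h_disj.eq_bot, finrank_bot] at this
  omega

theorem sup_eq_of_finrank_eq_one {p ρ W : Submodule F V} (hp : finrank F p = 1) (h : ¬ p ≤ ρ)
    (hW : finrank F W = finrank F ρ + 1) (hpW : p ≤ W) (hρW : ρ ≤ W) : p ⊔ ρ = W :=
  Submodule.eq_of_le_of_finrank_eq (sup_le hpW hρW)
    ((finrank_sup_of_finrank_eq_one hp h).trans hW.symm)

theorem pairwise_sup_eq_of_finrank_eq_one {p W : Submodule F V} (hp : finrank F p = 1) :
    {σ | ¬ p ≤ σ ∧ p ⊔ σ = W}.Pairwise fun σ τ ↦ σ ⊔ τ = W := by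
  rintro σ ⟨hpσ, rfl⟩ τ ⟨hpτ, hτ⟩ h_ne
  have h_finrank : finrank F τ = finrank F σ := by
    have := finrank_sup_of_finrank_eq_one hp hpτ
    rw [hτ, finrank_sup_of_finrank_eq_one hp hpσ] at this
    omega
  have h_lt : σ < σ ⊔ τ := left_lt_sup.2 fun h ↦
    h_ne (Submodule.eq_of_le_of_finrank_eq h h_finrank).symm
  refine Submodule.eq_of_le_of_finrank_le (sup_le le_sup_right (hτ ▸ le_sup_right)) ?_
  rw [finrank_sup_of_finrank_eq_one hp hpσ]
  exact Submodule.finrank_lt_finrank_of_lt h_lt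

theorem ncard_not_le_sup_eq {p ρ : Submodule F V} (hp : finrank F p = 1) (h : ¬ p ≤ ρ) :
    {σ | ¬ p ≤ σ ∧ p ⊔ σ = p ⊔ ρ}.ncard = Nat.card F ^ finrank F ρ := by
  have h_atom := Submodule.isAtom_iff_finrank_eq_one.2 hp
  simp only [h_atom.not_le_iff_disjoint]
  rw [ncard_disjoint_sup_eq (h_atom.not_le_iff_disjoint.1 h), hp, mul_one]

theorem ncard_coe_submodule (X : Submodule F V) :
    (X : Set V).ncard = Nat.card F ^ finrank F X :=
  natCard_eq_pow_finrank (V := X)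

variable [Finite F]

theorem ncard_sdiff_le_s10 {X E : Submodule F V} {d : ℕ} (hX : finrank F X = d + 1)
    (hXE : d ≤ finrank F ↥(X ⊓ E)) :
    ((X : Set V) \ E).ncard ≤ (Nat.card F - 1) * Nat.card F ^ d := by
  have : Finite V := Module.finite_of_finite F
  have h_pow : Nat.card F ^ d ≤ Nat.card F ^ finrank F ↥(X ⊓ E) :=
    Nat.pow_le_pow_right Nat.card_pos hXE
  have h_split := Set.ncard_inter_add_ncard_sdiff_eq_ncard (X : Set V) E
  rw [← Submodule.coe_inf, ncard_coe_submodule, ncard_coe_submodule, hX, pow_succ'] at h_split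
  rw [Nat.sub_one_mul]
  omega

theorem pow_finrank_le_of_cover_s10 {E : Submodule F V} {A 𝓦 : Finset (Submodule F V)} {a b : ℕ}
    (hA : ∀ H ∈ A, finrank F H = a + 1 ∧ a ≤ finrank F ↥(H ⊓ E))
    (h𝓦 : ∀ W ∈ 𝓦, finrank F W = b + 1 ∧ b ≤ finrank F ↥(W ⊓ E))
    (hcover : ∀ v ∉ E, (∃ H ∈ A, v ∈ H) ∨ ∃ W ∈ 𝓦, v ∈ W) :
    Nat.card F ^ finrank F V ≤ Nat.card F ^ finrank F E +
      (#A * ((Nat.card F - 1) * Nat.card F ^ a) + #𝓦 * ((Nat.card F - 1) * Nat.card F ^ b)) := by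
  have : Finite V := Module.finite_of_finite F
  have h_subset : ((⊤ : Submodule F V) : Set V) ⊆
      E ∪ ((⋃ H ∈ A, (H : Set V) \ E) ∪ ⋃ W ∈ 𝓦, (W : Set V) \ E) := by
    intro v _
    by_cases hv : v ∈ E
    · exact .inl hv
    · rcases hcover v hv with ⟨X, hX, hvX⟩ | ⟨X, hX, hvX⟩
      · exact .inr (.inl (Set.mem_biUnion hX ⟨hvX, hv⟩))
      · exact .inr (.inr (Set.mem_biUnion hX ⟨hvX, hv⟩))
  have ncard_biUnion_le {𝓧 : Finset (Submodule F V)} {d : ℕ}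
      (h𝓧 : ∀ X ∈ 𝓧, finrank F X = d + 1 ∧ d ≤ finrank F ↥(X ⊓ E)) :
      (⋃ X ∈ 𝓧, (X : Set V) \ E).ncard ≤ #𝓧 * ((Nat.card F - 1) * Nat.card F ^ d) :=
    (𝓧.set_ncard_biUnion_le _).trans <|
      sum_le_card_nsmul _ _ _ fun X hX ↦ ncard_sdiff_le_s10 (h𝓧 X hX).1 (h𝓧 X hX).2
  calc Nat.card F ^ finrank F V = ((⊤ : Submodule F V) : Set V).ncard := by
        rw [ncard_coe_submodule, finrank_top]
    _ ≤ (E : Set V).ncard +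
          ((⋃ H ∈ A, (H : Set V) \ E).ncard + (⋃ W ∈ 𝓦, (W : Set V) \ E).ncard) :=
        (Set.ncard_le_ncard h_subset).trans <| (Set.ncard_union_le _ _).trans <|
          Nat.add_le_add_left (Set.ncard_union_le _ _) _
    _ ≤ _ := by
        rw [ncard_coe_submodule]
        exact Nat.add_le_add_left (Nat.add_le_add (ncard_biUnion_le hA) (ncard_biUnion_le h𝓦)) _

/-- In the quotient geometry `PG(j + 1, q)` at `ρ`: if a set `𝓦` of points and a set `A` of
hyperplanes cover everything, then `(q + 1 - |A|) q ^ j ≤ |𝓦|`. -/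
theorem mul_pow_le_card_add_card_mul_pow_of_cover {k j : ℕ} {ρ : Submodule F V}
    {A 𝓦 : Finset (Submodule F V)} (hV : finrank F V = k + j + 2) (hρ : finrank F ρ = k)
    (hA : ∀ H ∈ A, ρ ≤ H ∧ finrank F H = k + j + 1)
    (h𝓦 : ∀ W ∈ 𝓦, ρ ≤ W ∧ finrank F W = k + 1)
    (hcover : ∀ v ∉ ρ, (∃ H ∈ A, v ∈ H) ∨ ∃ W ∈ 𝓦, v ∈ W) :
    (Nat.card F + 1) * Nat.card F ^ j ≤ #𝓦 + #A * Nat.card F ^ j := by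
  classical
  have h𝓦_inf {E : Submodule F V} (hE : ρ ≤ E) (W) (hW : W ∈ 𝓦) :
      finrank F W = k + 1 ∧ k ≤ finrank F ↥(W ⊓ E) :=
    ⟨(h𝓦 W hW).2, hρ.symm.trans_le (Submodule.finrank_mono (le_inf (h𝓦 W hW).1 hE))⟩
  obtain ⟨r, hr⟩ : ∃ r, Nat.card F = r + 1 := Nat.exists_eq_add_of_le' Nat.card_pos
  have hr_pos : 0 < r := by
    have := Finite.one_lt_card (α := F)
    omega
  refine Nat.le_of_mul_le_mul_left (c := r * (r + 1) ^ k) ?_ (by positivity)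
  rcases A.eq_empty_or_nonempty with rfl | ⟨H₀, hH₀⟩
  · have h := pow_finrank_le_of_cover_s10 (a := 0) (by simp) (h𝓦_inf le_rfl) hcover
    have h_pow : (r + 1) ^ k ≤ (r + 1) ^ k * (r + 1) ^ j :=
      Nat.le_mul_of_pos_right _ (by positivity)
    simp only [hV, hρ, hr, card_empty, Nat.add_sub_cancel, pow_add] at h ⊢
    linarith
  · have hA_inf (H) (hH : H ∈ A.erase H₀) :
        finrank F H = k + j + 1 ∧ k + j ≤ finrank F ↥(H ⊓ H₀) := by
      have := Submodule.finrank_sup_add_finrank_inf_eq H H₀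
      have := (H ⊔ H₀).finrank_le
      have := (hA H₀ hH₀).2
      have := (hA H (mem_of_mem_erase hH)).2
      omega
    have h := pow_finrank_le_of_cover_s10 hA_inf (h𝓦_inf (hA H₀ hH₀).1) fun v hv ↦
      (hcover v fun hvρ ↦ hv ((hA H₀ hH₀).1 hvρ)).imp_left fun ⟨H, hH, hvH⟩ ↦
        ⟨H, mem_erase.2 ⟨by rintro rfl; exact hv hvH, hH⟩, hvH⟩
    rw [← card_erase_add_one hH₀]
    simp only [hV, (hA H₀ hH₀).2, hr, Nat.add_sub_cancel, pow_add] at h ⊢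
    linarith

theorem sum_card_filter_le_of_pairwise_sup_eq {α : Type*} [SemilatticeSup α]
    [DecidableRel (α := α) (· ≤ ·)] {𝓒 B : Finset α} {W : α}
    (h𝓒 : (𝓒 : Set α).Pairwise fun σ τ ↦ σ ⊔ τ = W) (hB : ∀ H ∈ B, ¬ W ≤ H) :
    ∑ σ ∈ 𝓒, #{H ∈ B | σ ≤ H} ≤ #B := by
  have card_filter_le_one (H) (hH : H ∈ B) : #{σ ∈ 𝓒 | σ ≤ H} ≤ 1 := by
    refine card_le_one.2 fun σ hσ τ hτ ↦ ?_
    obtain ⟨hσ𝓒, hσH⟩ := mem_filter.1 hσ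
    obtain ⟨hτ𝓒, hτH⟩ := mem_filter.1 hτ
    by_contra h_ne
    exact hB H hH (h𝓒 hσ𝓒 hτ𝓒 h_ne ▸ sup_le hσH hτH)
  calc ∑ σ ∈ 𝓒, #{H ∈ B | σ ≤ H} = ∑ H ∈ B, #{σ ∈ 𝓒 | σ ≤ H} :=
        sum_card_bipartiteAbove_eq_sum_card_bipartiteBelow (· ≤ ·)
    _ ≤ #B := by simpa using sum_le_card_nsmul B _ 1 card_filter_le_one

/-- Blocking sets with respect to `k`-spaces: `B₀` is a set of points and `B₁` a set of hyperplanes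
of the projective space of `V`, whose `k`-spaces are the subspaces of `V` of rank `k + 1`. -/
structure IsBlockingSet (k : ℕ) (B₀ B₁ : Set (Submodule F V)) : Prop where
  finrank_point : ∀ p ∈ B₀, finrank F p = 1
  finrank_hyperplane : ∀ H ∈ B₁, finrank F H + 1 = finrank F V
  blocks : ∀ W : Submodule F V, finrank F W = k + 1 → (∃ p ∈ B₀, p ≤ W) ∨ ∃ H ∈ B₁, W ≤ H

namespace IsBlockingSet

open scoped Classical in
theorem mul_pow_le_card_image_sup_add {k j : ℕ} {B₀ B₁ : Finset (Submodule F V)}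
    (hB : IsBlockingSet k (B₀ : Set (Submodule F V)) B₁) (hV : finrank F V = k + j + 2)
    {σ : Submodule F V} (hσ : finrank F σ = k) (hσB₀ : ∀ p ∈ B₀, ¬ p ≤ σ) :
    (Nat.card F + 1) * Nat.card F ^ j ≤
      #(B₀.image (· ⊔ σ)) + #{H ∈ B₁ | σ ≤ H} * Nat.card F ^ j := by
  refine mul_pow_le_card_add_card_mul_pow_of_cover hV hσ ?_ ?_ fun v hv ↦ ?_
  · intro H hH
    obtain ⟨hHB₁, hσH⟩ := mem_filter.1 hH
    exact ⟨hσH, by have := hB.finrank_hyperplane H hHB₁; omega⟩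
  · simp only [mem_image, forall_exists_index, and_imp, forall_apply_eq_imp_iff₂]
    exact fun p hp ↦ ⟨le_sup_right, hσ ▸
      finrank_sup_of_finrank_eq_one (hB.finrank_point p hp) (hσB₀ p hp)⟩
  · have hv_rank : finrank F ↥(F ∙ v ⊔ σ) = finrank F σ + 1 :=
      finrank_sup_of_finrank_eq_one (finrank_span_singleton fun h ↦ hv (h ▸ σ.zero_mem))
        (by simpa using hv)
    have hv_mem : v ∈ F ∙ v ⊔ σ := Submodule.mem_sup_left (Submodule.mem_span_singleton_self v)
    rcases hB.blocks _ (hσ ▸ hv_rank) with ⟨p, hp, hp_le⟩ | ⟨H, hH, hH_ge⟩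
    · exact .inr ⟨_, mem_image_of_mem _ hp, (sup_eq_of_finrank_eq_one (hB.finrank_point p hp)
        (hσB₀ p hp) hv_rank hp_le le_sup_right).symm ▸ hv_mem⟩
    · exact .inl ⟨H, mem_filter.2 ⟨hH, le_sup_right.trans hH_ge⟩, hH_ge hv_mem⟩

open scoped Classical in
theorem card_mul_le_sum_card_image_sup_add {k j : ℕ} {B₀ B₁ 𝓒 : Finset (Submodule F V)}
    (hB : IsBlockingSet k (B₀ : Set (Submodule F V)) B₁) (hV : finrank F V = k + j + 2)
    (h𝓒 : ∀ σ ∈ 𝓒, finrank F σ = k) (h𝓒B₀ : ∀ σ ∈ 𝓒, ∀ p ∈ B₀, ¬ p ≤ σ) {W : Submodule F V}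
    (h_pairwise : (𝓒 : Set (Submodule F V)).Pairwise fun σ τ ↦ σ ⊔ τ = W)
    (hB₁ : ∀ H ∈ B₁, ¬ W ≤ H) :
    #𝓒 * ((Nat.card F + 1) * Nat.card F ^ j) ≤
      ∑ σ ∈ 𝓒, #(B₀.image (· ⊔ σ)) + #B₁ * Nat.card F ^ j :=
  calc #𝓒 * ((Nat.card F + 1) * Nat.card F ^ j)
      ≤ ∑ σ ∈ 𝓒, (#(B₀.image (· ⊔ σ)) + #{H ∈ B₁ | σ ≤ H} * Nat.card F ^ j) :=
        card_nsmul_le_sum _ _ _ fun σ hσ ↦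
          hB.mul_pow_le_card_image_sup_add hV (h𝓒 σ hσ) (h𝓒B₀ σ hσ)
    _ = ∑ σ ∈ 𝓒, #(B₀.image (· ⊔ σ)) + (∑ σ ∈ 𝓒, #{H ∈ B₁ | σ ≤ H}) * Nat.card F ^ j := by
        rw [sum_add_distrib, sum_mul]
    _ ≤ ∑ σ ∈ 𝓒, #(B₀.image (· ⊔ σ)) + #B₁ * Nat.card F ^ j := by
        gcongr
        exact sum_card_filter_le_of_pairwise_sup_eq h_pairwise hB₁

theorem injOn_sup {k j : ℕ} {B₀ B₁ : Finset (Submodule F V)}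
    (hB : IsBlockingSet k (B₀ : Set (Submodule F V)) B₁) (hV : finrank F V = k + j + 2)
    (hcard : Nat.card F ^ k * #B₀ + Nat.card F ^ j * #B₁ ≤
      (Nat.card F + 1) * Nat.card F ^ (k + j))
    {p₀ ρ : Submodule F V} (hp₀ : finrank F p₀ = 1) (hρ : finrank F ρ = k) (hp₀ρ : ¬ p₀ ≤ ρ)
    (hB₀ : ∀ p ∈ B₀, p ≤ p₀ ⊔ ρ → p = p₀) (hB₁ : ∀ H ∈ B₁, ¬ p₀ ⊔ ρ ≤ H) :
    Set.InjOn (· ⊔ ρ) (B₀ : Set (Submodule F V)) := by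
  classical
  have : Finite V := Module.finite_of_finite F
  obtain ⟨𝓒, h𝓒⟩ := (Set.toFinite {σ | ¬ p₀ ≤ σ ∧ p₀ ⊔ σ = p₀ ⊔ ρ}).exists_finset_coe
  have mem_𝓒 {σ} : σ ∈ 𝓒 ↔ ¬ p₀ ≤ σ ∧ p₀ ⊔ σ = p₀ ⊔ ρ := Set.ext_iff.1 h𝓒 σ
  have card_𝓒 : #𝓒 = Nat.card F ^ k := by
    rw [← Set.ncard_coe_finset, h𝓒, ncard_not_le_sup_eq hp₀ hp₀ρ, hρ]
  have finrank_𝓒 (σ) (hσ : σ ∈ 𝓒) : finrank F σ = k := by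
    have h := finrank_sup_of_finrank_eq_one hp₀ (mem_𝓒.1 hσ).1
    rw [(mem_𝓒.1 hσ).2, finrank_sup_of_finrank_eq_one hp₀ hp₀ρ] at h
    omega
  have h𝓒B₀ (σ) (hσ : σ ∈ 𝓒) (p) (hp : p ∈ B₀) : ¬ p ≤ σ := fun hpσ ↦ by
    obtain ⟨hp₀σ, hσ_sup⟩ := mem_𝓒.1 hσ
    exact hp₀σ (hB₀ p hp (hpσ.trans (hσ_sup ▸ le_sup_right)) ▸ hpσ)
  have h_average := hB.card_mul_le_sum_card_image_sup_add hV finrank_𝓒 h𝓒B₀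
    (h𝓒 ▸ pairwise_sup_eq_of_finrank_eq_one hp₀) hB₁
  have h_le (σ) (_ : σ ∈ 𝓒) : #(B₀.image (· ⊔ σ)) ≤ #B₀ := card_image_le
  have h_sum : ∑ σ ∈ 𝓒, #(B₀.image (· ⊔ σ)) = ∑ _σ ∈ 𝓒, #B₀ := by
    refine (sum_le_sum h_le).antisymm ?_
    rw [sum_const, smul_eq_mul]
    rw [card_𝓒] at h_average ⊢
    rw [pow_add] at hcard
    linarith
  exact card_image_iff.1 <| (sum_eq_sum_iff_of_le h_le).1 h_sum ρ (mem_𝓒.2 ⟨hp₀ρ, rfl⟩)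

end IsBlockingSet

theorem stmt_10_general {k j : ℕ} {B₀ B₁ : Set (Submodule F V)} (hB : IsBlockingSet k B₀ B₁)
    (hV : finrank F V = k + j + 2)
    (hcard : Nat.card F ^ k * B₀.ncard + Nat.card F ^ j * B₁.ncard ≤
      (Nat.card F + 1) * Nat.card F ^ (k + j))
    {ρ : Submodule F V} (hρ : finrank F ρ = k) (hρB₀ : ∀ p ∈ B₀, ¬ p ≤ ρ)
    (hex : ∃ W₀ : Submodule F V, finrank F W₀ = k + 1 ∧ ρ ≤ W₀ ∧
      {p ∈ B₀ | p ≤ W₀}.ncard = 1 ∧ ∀ H ∈ B₁, ¬ W₀ ≤ H) :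
    ∀ W : Submodule F V, finrank F W = k + 1 → ρ ≤ W → {p ∈ B₀ | p ≤ W}.ncard ≤ 1 := by
  have : Finite V := Module.finite_of_finite F
  have h_sup {p X : Submodule F V} (hp : p ∈ B₀) (hX : finrank F X = k + 1) (hpX : p ≤ X)
      (hρX : ρ ≤ X) : p ⊔ ρ = X :=
    sup_eq_of_finrank_eq_one (hB.finrank_point p hp) (hρB₀ p hp) (hρ.symm ▸ hX) hpX hρX
  obtain ⟨W₀, hW₀, hρW₀, hW₀B₀, hW₀B₁⟩ := hex
  obtain ⟨p₀, hp₀⟩ := Set.ncard_eq_one.1 hW₀B₀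
  obtain ⟨hp₀B₀, hp₀W₀⟩ : p₀ ∈ B₀ ∧ p₀ ≤ W₀ := hp₀.ge rfl
  obtain rfl : p₀ ⊔ ρ = W₀ := h_sup hp₀B₀ hW₀ hp₀W₀ hρW₀
  have h_inj : Set.InjOn (· ⊔ ρ) B₀ := by
    lift B₀ to Finset (Submodule F V) using B₀.toFinite
    lift B₁ to Finset (Submodule F V) using B₁.toFinite
    rw [Set.ncard_coe_finset, Set.ncard_coe_finset] at hcard
    exact hB.injOn_sup hV hcard (hB.finrank_point p₀ hp₀B₀) hρ (hρB₀ p₀ hp₀B₀)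
      (fun p hp hpW₀ ↦ hp₀.le ⟨hp, hpW₀⟩) hW₀B₁
  intro W hW hρW
  refine (Set.ncard_le_one (Set.toFinite _)).2 fun p ⟨hp, hpW⟩ p' ⟨hp', hpW'⟩ ↦ ?_
  exact h_inj hp hp' ((h_sup hp hW hpW hρW).trans (h_sup hp' hW hpW' hρW).symm)

/-- Let `B = B0 ∪ Bn` be a blocking set of points and hyperplanes
with respect to `k`-spaces in `PG(2k+1,q)` with `|B| = (q+1)·q^k`, and let `ρ` be a
`(k-1)`-space containing no point of `B0`.  If some `k`-space through `ρ` contains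
exactly one point of `B0` and lies in no hyperplane of `Bn`, then every `k`-space
through `ρ` contains at most one point of `B0`. -/
theorem stmt_10 {F : Type} [Field F] [Fintype F] (k : ℕ) (hk : 1 ≤ k)
    (B0 Bn : Set (Submodule F (Fin (2 * k + 2) → F)))
    (hB0 : ∀ p ∈ B0, Module.finrank F p = 1)
    (hBn : ∀ H ∈ Bn, Module.finrank F H = 2 * k + 1)
    (hblock : ∀ W : Submodule F (Fin (2 * k + 2) → F), Module.finrank F W = k + 1 →
      (∃ p ∈ B0, p ≤ W) ∨ (∃ H ∈ Bn, W ≤ H))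
    (hsize : B0.ncard + Bn.ncard = (Fintype.card F + 1) * (Fintype.card F) ^ k)
    (ρ : Submodule F (Fin (2 * k + 2) → F)) (hρ : Module.finrank F ρ = k)
    (hρB0 : ∀ p ∈ B0, ¬ p ≤ ρ)
    (hex : ∃ W0 : Submodule F (Fin (2 * k + 2) → F), Module.finrank F W0 = k + 1 ∧ ρ ≤ W0 ∧
      {p ∈ B0 | p ≤ W0}.ncard = 1 ∧ ∀ H ∈ Bn, ¬ W0 ≤ H) :
    ∀ W : Submodule F (Fin (2 * k + 2) → F), Module.finrank F W = k + 1 → ρ ≤ W →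
      {p ∈ B0 | p ≤ W}.ncard ≤ 1 := by
  have hB : IsBlockingSet k B0 Bn := ⟨hB0, fun H hH ↦ by simp [hBn H hH], hblock⟩
  refine stmt_10_general hB (by rw [finrank_fin_fun, two_mul]) ?_ hρ hρB0 hex
  rw [← mul_add, hsize, ← Nat.card_eq_fintype_card, pow_add, mul_left_comm]
end

section
/- Let q be a prime power, k ≥ 1, and n = 2k+1. Let B = B_0 ∪ B_{n-1} be a blocking set with respect to k-spaces in PG(2k+1,q) consisting of points and hyperplanes with |B| = (q+1)·q^k. Then q^k divides |B_0|. -/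
/-!
Induct on `k`, proving also that a blocking set with at most `(q + 1) * q ^ k` elements has exactly
that many. For an incident point-hyperplane pair `P ≤ H` outside the blocking set, the points
`p ⊔ P` with `p ≤ H` and the hyperplanes `h ⊓ H` with `P ≤ h` block the `(k - 1)`-spaces of the
geometry `[P, H]`. Double counting produces such a pair for which at most `(q + 1) * q ^ (k - 1)`
points and hyperplanes contribute, so the induced blocking set is minimal. It has a hyperplane `G`
that contains few points, and counting `B0` along the pencil of hyperplanes through `G` gives
`q * |B0 ∩ H| ≤ |B0|`; dually `q` times the number of `h` through `P` is at most `|Bn|`. The total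
leaves no slack, so `|B0| = q * |B0 ∩ H|`, and `H` is again a hyperplane with few points.

The dual estimate comes for free because the argument takes place in finite modular lattices with a
rank function, a class closed under order duality.
-/

namespace ProjectiveLattice

open Finset

universe u

theorem eq_of_covBy_of_covBy_of_le {L : Type u} [PartialOrder L] {a x y : L} (hx : a ⋖ x)
    (hy : a ⋖ y) (hxy : x ≤ y) : x = y :=
  (hy.eq_or_eq hx.le hxy).resolve_left hx.ne'

section Modular

variable {L : Type u} [Lattice L]

theorem covBy_sup_of_covBy_of_ne [IsUpperModularLattice L] {a x y : L} (hx : a ⋖ x) (hy : a ⋖ y)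
    (hne : x ≠ y) : y ⋖ x ⊔ y :=
  covBy_sup_of_inf_covBy_left (by rwa [hx.wcovBy.inf_eq hy.wcovBy hne])

theorem inf_covBy_of_covBy_of_ne [IsLowerModularLattice L] {c x y : L} (hx : x ⋖ c) (hy : y ⋖ c)
    (hne : x ≠ y) : x ⊓ y ⋖ y :=
  inf_covBy_of_covBy_sup_left (by rwa [hx.wcovBy.sup_eq hy.wcovBy hne])

end Modular

/-- `r` is a rank function on `L`, and every interval of length two of `L` has exactly `q + 1`
inner elements. Together with modularity this is what we use of the lattice of subspaces of a
projective geometry of order `q`. Only differences of ranks matter; they are integers so that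
`-r` is a rank function of the same kind on the order dual. -/
structure IsProjectiveRank {L : Type u} [Preorder L] (r : L → ℤ) (q : ℕ) : Prop where
  strictMono : StrictMono r
  rank_eq_of_covBy : ∀ {x y : L}, x ⋖ y → r y = r x + 1
  ncard_Ioo : ∀ {x y z : L}, x ⋖ z → z ⋖ y → (Set.Ioo x y).ncard = q + 1

namespace IsProjectiveRank

variable {L : Type u} [PartialOrder L] {r : L → ℤ} {q : ℕ}

theorem dual (hr : IsProjectiveRank r q) :
    IsProjectiveRank (fun x : Lᵒᵈ => -r (OrderDual.ofDual x)) q where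
  strictMono _ _ h := neg_lt_neg (hr.strictMono h)
  rank_eq_of_covBy h := by linarith [hr.rank_eq_of_covBy h.ofDual]
  ncard_Ioo {x y z} hxz hzy := by
    rw [← hr.ncard_Ioo hzy.ofDual hxz.ofDual]
    exact Set.ncard_congr (fun w _ => OrderDual.ofDual w) (fun _ hw => ⟨hw.2, hw.1⟩)
      (fun _ _ _ _ h => h) fun w hw => ⟨OrderDual.toDual w, ⟨hw.2, hw.1⟩, rfl⟩

theorem covBy_iff (hr : IsProjectiveRank r q) {x y : L} (hxy : x ≤ y) :
    x ⋖ y ↔ r y = r x + 1 := by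
  refine ⟨hr.rank_eq_of_covBy, fun h => ⟨hxy.lt_of_ne ?_, fun z hxz hzy => ?_⟩⟩
  · rintro rfl
    omega
  · have := hr.strictMono hxz
    have := hr.strictMono hzy
    omega

end IsProjectiveRank

section Intervals

variable {L : Type u} [Fintype L]

open Classical in
/-- The points of the projective geometry `[A, C]`. -/
noncomputable def points [Preorder L] (A C : L) : Finset L := {P | A ⋖ P ∧ P ≤ C}

open Classical in
/-- The hyperplanes of the projective geometry `[A, C]`. -/
noncomputable def hyperplanes [Preorder L] (A C : L) : Finset L := {H | A ≤ H ∧ H ⋖ C}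

@[simp]
theorem mem_points [Preorder L] {A C P : L} : P ∈ points A C ↔ A ⋖ P ∧ P ≤ C := by
  simp [points]

@[simp]
theorem mem_hyperplanes [Preorder L] {A C H : L} : H ∈ hyperplanes A C ↔ A ≤ H ∧ H ⋖ C := by
  simp [hyperplanes]

theorem card_hyperplanes_eq_card_points_dual [Preorder L] (A C : L) :
    #(hyperplanes A C) = #(points (OrderDual.toDual C) (OrderDual.toDual A)) :=
  card_equiv OrderDual.toDual fun H => by simp [and_comm]

namespace IsProjectiveRank

variable {r : L → ℤ} {q : ℕ}

theorem card_points_of_covBy_of_covBy [PartialOrder L] (hr : IsProjectiveRank r q) {A P C : L}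
    (hAP : A ⋖ P) (hPC : P ⋖ C) : #(points A C) = q + 1 := by
  rw [← hr.ncard_Ioo hAP hPC, ← Set.ncard_coe_finset]
  congr 1
  ext z
  simp only [mem_coe, mem_points, Set.mem_Ioo]
  have hP := hr.rank_eq_of_covBy hAP
  have hC := hr.rank_eq_of_covBy hPC
  constructor
  · rintro ⟨hAz, hzC⟩
    refine ⟨hAz.lt, hzC.lt_of_ne ?_⟩
    rintro rfl
    have := hr.rank_eq_of_covBy hAz
    omega
  · rintro ⟨hAz, hzC⟩
    have := hr.strictMono hAz
    have := hr.strictMono hzC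
    exact ⟨(hr.covBy_iff hAz.le).2 (by omega), hzC.le⟩

theorem card_hyperplanes_of_covBy_of_covBy [PartialOrder L] (hr : IsProjectiveRank r q) {A H C : L}
    (hAH : A ⋖ H) (hHC : H ⋖ C) : #(hyperplanes A C) = q + 1 := by
  rw [card_hyperplanes_eq_card_points_dual]
  exact hr.dual.card_points_of_covBy_of_covBy hHC.toDual hAH.toDual

theorem pairwise_hyperplanes_inf_le [SemilatticeInf L] (hr : IsProjectiveRank r q) {A H C : L}
    (hAH : A ⋖ H) (hHC : H ⋖ C) : (hyperplanes A C : Set L).Pairwise fun x y => x ⊓ y ≤ A := by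
  have hA := hr.rank_eq_of_covBy hAH
  have hC := hr.rank_eq_of_covBy hHC
  have hcovBy : ∀ z ∈ hyperplanes A C, A ⋖ z := fun z hz => by
    obtain ⟨hAz, hzC⟩ := mem_hyperplanes.1 hz
    have := hr.rank_eq_of_covBy hzC
    exact (hr.covBy_iff hAz).2 (by omega)
  exact fun x hx y hy hxy => ((hcovBy x hx).wcovBy.inf_eq (hcovBy y hy).wcovBy hxy).le

variable [Lattice L] [IsModularLattice L]

-- Every point other than `P` lies on a unique line through `P`, and each such line has `q` of them.
theorem card_points_eq_mul_add_one (hr : IsProjectiveRank r q) {A P C : L} (hAP : A ⋖ P)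
    (hPC : P ≤ C) : #(points A C) = q * #(points P C) + 1 := by
  classical
  have hlines : Set.MapsTo (· ⊔ P) ((points A C).erase P) (points P C) := by
    intro x hx
    simp only [coe_erase, Set.mem_sdiff, mem_coe, mem_points, Set.mem_singleton_iff] at hx ⊢
    exact ⟨covBy_sup_of_covBy_of_ne hx.1.1 hAP hx.2, sup_le hx.1.2 hPC⟩
  have hfibre : ∀ l ∈ points P C, #{x ∈ (points A C).erase P | x ⊔ P = l} = q := by
    intro l hl
    obtain ⟨hPl, hlC⟩ := mem_points.1 hl
    have hcard : #((points A l).erase P) = q := by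
      rw [card_erase_of_mem (by simp [hAP, hPl.le]), hr.card_points_of_covBy_of_covBy hAP hPl,
        Nat.add_sub_cancel]
    rw [← hcard]
    congr 1
    ext x
    simp only [mem_filter, mem_erase, mem_points]
    constructor
    · rintro ⟨⟨hne, hAx, -⟩, rfl⟩
      exact ⟨hne, hAx, le_sup_left⟩
    · rintro ⟨hne, hAx, hxl⟩
      have hPx := covBy_sup_of_covBy_of_ne hAx hAP hne
      exact ⟨⟨hne, hAx, hxl.trans hlC⟩,
        (hPl.eq_or_eq hPx.le (sup_le hxl hPl.le)).resolve_left hPx.ne'⟩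
  rw [← card_erase_add_one (mem_points.2 ⟨hAP, hPC⟩), card_eq_sum_card_fiberwise hlines,
    sum_const_nat hfibre, mul_comm]

theorem card_points (hr : IsProjectiveRank r q) {A C : L} {n : ℕ} (hAC : A ≤ C)
    (hn : r C = r A + n) : #(points A C) = ∑ i ∈ range n, q ^ i := by
  induction n generalizing A with
  | zero =>
    obtain rfl : A = C := hAC.eq_of_not_lt fun h => by
      have := hr.strictMono h
      omega
    simpa [eq_empty_iff_forall_notMem] using fun P (hP : A ⋖ P) => hP.lt.not_ge
  | succ n ih =>
    have hlt : A < C := hAC.lt_of_ne fun h => by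
      rw [h] at hn
      omega
    obtain ⟨P, hAP, hPC⟩ := exists_covBy_le_of_lt hlt
    have := hr.rank_eq_of_covBy hAP
    rw [hr.card_points_eq_mul_add_one hAP hPC, ih hPC (by omega), geom_sum_succ]

theorem card_hyperplanes (hr : IsProjectiveRank r q) {A C : L} {n : ℕ} (hAC : A ≤ C)
    (hn : r C = r A + n) : #(hyperplanes A C) = ∑ i ∈ range n, q ^ i := by
  rw [card_hyperplanes_eq_card_points_dual]
  exact hr.dual.card_points hAC (by simp only [OrderDual.ofDual_toDual]; omega)

end IsProjectiveRank

end Intervals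

section Arithmetic

theorem mul_le_of_mul_add_le_add_mul {q n s b c g : ℕ} (hsb : q + 1 ≤ s + b) (hs : s ≤ q + 1)
    (hcount : s * c + g ≤ n + s * g) (hlight : q * g + b * c ≤ c) : q * c ≤ n := by
  have : (q + 1) * c + g ≤ n + c + g := calc
    (q + 1) * c + g ≤ (s + b) * c + g := by gcongr
    _ = s * c + g + b * c := by ring
    _ ≤ n + s * g + b * c := by gcongr
    _ ≤ n + (q + 1) * g + b * c := by gcongr
    _ = n + (q * g + b * c) + g := by ring
    _ ≤ n + c + g := by gcongr
  linarith

theorem add_one_mul_pow_le_geom_sum (q m : ℕ) :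
    (q + 1) * q ^ m ≤ ∑ i ∈ range (m + 2), q ^ i := by
  rw [sum_range_succ, sum_range_succ, pow_succ]
  nlinarith [Nat.zero_le (∑ i ∈ range m, q ^ i)]

theorem card_sq_add_card_le_geom_sum {q : ℕ} (hq : 2 ≤ q) (k : ℕ) :
    ((q + 1) * q ^ k) ^ 2 + (q + 1) * q ^ k ≤ 2 * (q * ∑ i ∈ range (2 * k + 2), q ^ i) := by
  have hpow : 1 ≤ q ^ k := Nat.one_le_pow _ _ (by omega)
  have hlinear : (q + 1) * q ^ k + 1 ≤ 2 * q * q ^ k := by nlinarith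
  calc ((q + 1) * q ^ k) ^ 2 + (q + 1) * q ^ k
      = ((q + 1) * q ^ k + 1) * ((q + 1) * q ^ k) := by ring
    _ ≤ 2 * q * q ^ k * ((q + 1) * q ^ k) := Nat.mul_le_mul_right _ hlinear
    _ = 2 * (q * ((q + 1) * q ^ (2 * k))) := by ring
    _ ≤ 2 * (q * ∑ i ∈ range (2 * k + 2), q ^ i) := by
      gcongr
      exact add_one_mul_pow_le_geom_sum q (2 * k)

-- The weights `θ` and `t - y` cancel the terms with `y * b * θ`; what remains is quadratic in `y`
-- and is decided by the AM-GM inequality for `u = T + 1 - y` and `y`.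
theorem mul_lt_add_of_mul_sub_le {q a b y T θ t : ℤ} (hq : 0 < q) (hT : 0 < T) (hy : 0 ≤ y)
    (hyt : y ≤ t) (ht : t = q * θ + 1) (hθ : T ^ 2 + T ≤ 2 * (q * θ))
    (hpoints : (q * t + 1 - b) * y ≤ a * t) (hhyperplanes : (t - y) * (T + 1 - y) ≤ b * θ) :
    q * T < a + b := by
  by_contra! hab
  obtain ⟨u, rfl⟩ : ∃ u, T = u + y - 1 := ⟨T + 1 - y, by ring⟩
  have hqθ : 0 < q * θ := by nlinarith
  have hθ_pos : 0 < θ := (mul_pos_iff_of_pos_left hq).1 hqθ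
  have hweighted : y * θ + y ^ 2 * u + t * (t - 1 + u - 2 * (y * u)) ≤ 0 := by
    have h1 := mul_le_mul_of_nonneg_right hpoints hθ_pos.le
    have h2 := mul_le_mul_of_nonneg_left hhyperplanes (sub_nonneg.2 hyt)
    have h3 := mul_le_mul_of_nonneg_right hab (mul_nonneg (hy.trans hyt) hθ_pos.le)
    have hθt : q * θ = t - 1 := by linarith
    linear_combination h1 + h2 + h3 + (t * (u - 1)) * hθt
  rcases le_or_gt u 0 with hu | hu
  · have hneg : y ^ 2 - 2 * t * y + t ≤ 0 := by nlinarith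
    nlinarith [mul_nonneg_of_nonpos_of_nonpos hu hneg, mul_nonneg hy hθ_pos.le]
  · have hamgm : 0 ≤ t - 1 + u - 2 * (y * u) := by
      have : 8 * (u * (2 * y - 1)) ≤ 8 * (q * θ) + 1 := by
        nlinarith [sq_nonneg (2 * u - (2 * y - 1))]
      have : u * (2 * y - 1) ≤ q * θ := by omega
      linarith
    rcases hy.eq_or_lt with rfl | hy_pos
    · nlinarith
    · have : 0 ≤ t * (t - 1 + u - 2 * (y * u)) := mul_nonneg (hy.trans hyt) hamgm
      nlinarith [mul_pos hy_pos hθ_pos, mul_nonneg (sq_nonneg y) hu.le]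

theorem mul_lt_add_of_tsub_mul_le {q a b y T θ : ℕ} (hq : 0 < q) (hT : 0 < T)
    (hy : y ≤ q * θ + 1) (hb : b ≤ q * (q * θ + 1) + 1) (hθ : T ^ 2 + T ≤ 2 * (q * θ))
    (hpoints : (q * (q * θ + 1) + 1 - b) * y ≤ a * (q * θ + 1))
    (hhyperplanes : (q * θ + 1 - y) * (T + 1 - y) ≤ b * θ) : q * T < a + b := by
  zify [hb] at hpoints
  zify [hy] at hhyperplanes
  exact_mod_cast mul_lt_add_of_mul_sub_le (T := T) (by positivity) (by exact_mod_cast hT)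
    (by positivity) (by exact_mod_cast hy) rfl (by exact_mod_cast hθ) hpoints
    ((mul_le_mul_of_nonneg_left (by omega) (by omega)).trans hhyperplanes)

end Arithmetic

section BlockingSets

variable {L : Type u}

section Preorder

variable [Preorder L]

/-- `B0` and `Bn` are sets of points and of hyperplanes of the projective geometry `[A, C]`, which
has projective dimension `2 * k + 1` (rank `2 * k + 2`), and together they block its `k`-spaces
(subspaces of rank `k + 1`). -/
structure IsBlocking (r : L → ℤ) (k : ℕ) (A C : L) (B0 Bn : Finset L) : Prop where
  le : A ≤ C
  rank_eq : r C = r A + (2 * k + 2)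
  isPoint : ∀ P ∈ B0, A ⋖ P ∧ P ≤ C
  isHyperplane : ∀ H ∈ Bn, A ≤ H ∧ H ⋖ C
  blocks : ∀ W, A ≤ W → W ≤ C → r W = r A + (k + 1) → (∃ P ∈ B0, P ≤ W) ∨ ∃ H ∈ Bn, W ≤ H

/-- An incident point-hyperplane pair of `[A, C]` both of whose members lie outside the
blocking set. -/
structure IsFreeFlag (A C : L) (B0 Bn : Finset L) (P H : L) : Prop where
  covBy_point : A ⋖ P
  point_le : P ≤ H
  hyperplane_covBy : H ⋖ C
  point_notMem : P ∉ B0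
  hyperplane_notMem : H ∉ Bn

open Classical in
/-- A hyperplane `G` is light if, for `B0` nonempty, either `G ∉ Bn` and `G` contains at most a
`q`-th part of `B0`, or `G ∈ Bn` and `G` misses `B0`. The two cases are merged into one inequality
that is monotone in the two counts. -/
def IsLight (q : ℕ) (B0 Bn : Finset L) (G : L) : Prop :=
  q * #{p ∈ B0 | p ≤ G} + #{h ∈ Bn | G ≤ h} * #B0 ≤ #B0

/-- The properties of a blocking set of minimum size that are carried through the induction. -/
structure IsTight (q k : ℕ) (A C : L) (B0 Bn : Finset L) : Prop where
  card_eq : #B0 + #Bn = (q + 1) * q ^ k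
  pow_dvd : q ^ k ∣ #B0
  exists_isLight : ∃ G, A ≤ G ∧ G ⋖ C ∧ IsLight q B0 Bn G

/-- The induction hypothesis: blocking sets with at most `(q + 1) * q ^ k` elements are tight. -/
def SmallBlockingSetsTight (r : L → ℤ) (q k : ℕ) : Prop :=
  ∀ ⦃A C : L⦄ ⦃B0 Bn : Finset L⦄, IsBlocking r k A C B0 Bn → #B0 + #Bn ≤ (q + 1) * q ^ k →
    IsTight q k A C B0 Bn

variable {r : L → ℤ} {k : ℕ} {A C P H : L} {B0 Bn : Finset L}

theorem IsBlocking.dual (hB : IsBlocking r k A C B0 Bn) :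
    IsBlocking (fun x : Lᵒᵈ => -r (OrderDual.ofDual x)) k (OrderDual.toDual C) (OrderDual.toDual A)
      (Bn.map OrderDual.toDual.toEmbedding) (B0.map OrderDual.toDual.toEmbedding) where
  le := hB.le
  rank_eq := by
    simp only [OrderDual.ofDual_toDual]
    linarith [hB.rank_eq]
  isPoint := by simpa [and_comm] using hB.isHyperplane
  isHyperplane := by simpa [and_comm] using hB.isPoint
  blocks W hCW hWA hW := by
    simp only [OrderDual.ofDual_toDual] at hW
    have hrank := hB.rank_eq
    simpa [or_comm, OrderDual.le_toDual, OrderDual.toDual_le] using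
      hB.blocks (OrderDual.ofDual W) hWA hCW (by linarith)

theorem IsFreeFlag.dual (hF : IsFreeFlag A C B0 Bn P H) :
    IsFreeFlag (OrderDual.toDual C) (OrderDual.toDual A) (Bn.map OrderDual.toDual.toEmbedding)
      (B0.map OrderDual.toDual.toEmbedding) (OrderDual.toDual H) (OrderDual.toDual P) where
  covBy_point := hF.hyperplane_covBy.toDual
  point_le := hF.point_le
  hyperplane_covBy := hF.covBy_point.toDual
  point_notMem := by simpa using hF.hyperplane_notMem
  hyperplane_notMem := by simpa using hF.point_notMem

end Preorder

variable [Lattice L]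

open Classical in
/-- The points induced by `B0` on the geometry `[P, H]`. -/
noncomputable def residualPoints (B0 : Finset L) (P H : L) : Finset L :=
  {p ∈ B0 | p ≤ H}.image (· ⊔ P)

open Classical in
/-- The hyperplanes induced by `Bn` on the geometry `[P, H]`. -/
noncomputable def residualHyperplanes (Bn : Finset L) (P H : L) : Finset L :=
  {h ∈ Bn | P ≤ h}.image (· ⊓ H)

theorem mem_residualPoints {B0 : Finset L} {P H x : L} :
    x ∈ residualPoints B0 P H ↔ ∃ p ∈ B0, p ≤ H ∧ p ⊔ P = x := by
  simp [residualPoints, and_assoc]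

theorem mem_residualHyperplanes {Bn : Finset L} {P H x : L} :
    x ∈ residualHyperplanes Bn P H ↔ ∃ h ∈ Bn, P ≤ h ∧ h ⊓ H = x := by
  simp [residualHyperplanes, and_assoc]

variable {r : L → ℤ} {q k : ℕ} {A C P H G : L} {B0 Bn : Finset L}

open Classical in
theorem card_residualPoints_le (B0 : Finset L) (P H : L) :
    #(residualPoints B0 P H) ≤ #{p ∈ B0 | p ≤ H} :=
  card_image_le

open Classical in
theorem card_residualHyperplanes_le (Bn : Finset L) (P H : L) :
    #(residualHyperplanes Bn P H) ≤ #{h ∈ Bn | P ≤ h} :=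
  card_image_le

theorem IsBlocking.residue [IsModularLattice L] (hr : IsProjectiveRank r q)
    (hB : IsBlocking r (k + 1) A C B0 Bn) (hF : IsFreeFlag A C B0 Bn P H) :
    IsBlocking r k P H (residualPoints B0 P H) (residualHyperplanes Bn P H) := by
  have hrank := hB.rank_eq
  have hP := hr.rank_eq_of_covBy hF.covBy_point
  have hH := hr.rank_eq_of_covBy hF.hyperplane_covBy
  push_cast at hrank
  refine ⟨hF.point_le, by linarith, fun x hx => ?_, fun x hx => ?_, fun W hPW hWH hW => ?_⟩
  · obtain ⟨p, hp, hpH, rfl⟩ := mem_residualPoints.1 hx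
    exact ⟨covBy_sup_of_covBy_of_ne (hB.isPoint p hp).1 hF.covBy_point
      (ne_of_mem_of_not_mem hp hF.point_notMem), sup_le hpH hF.point_le⟩
  · obtain ⟨h, hh, hPh, rfl⟩ := mem_residualHyperplanes.1 hx
    exact ⟨le_inf hPh hF.point_le, inf_covBy_of_covBy_of_ne (hB.isHyperplane h hh).2
      hF.hyperplane_covBy (ne_of_mem_of_not_mem hh hF.hyperplane_notMem)⟩
  · obtain ⟨p, hp, hpW⟩ | ⟨h, hh, hWh⟩ := hB.blocks W (hF.covBy_point.le.trans hPW)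
      (hWH.trans hF.hyperplane_covBy.le) (by push_cast; linarith)
    · exact .inl ⟨p ⊔ P, mem_residualPoints.2 ⟨p, hp, hpW.trans hWH, rfl⟩, sup_le hpW hPW⟩
    · exact .inr ⟨h ⊓ H, mem_residualHyperplanes.2 ⟨h, hh, hPW.trans hWh, rfl⟩, le_inf hWh hWH⟩

open Classical in
theorem SmallBlockingSetsTight.le_card_add_card [IsModularLattice L]
    (IH : SmallBlockingSetsTight r q k) (hr : IsProjectiveRank r q)
    (hB : IsBlocking r (k + 1) A C B0 Bn) (hF : IsFreeFlag A C B0 Bn P H) :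
    (q + 1) * q ^ k ≤ #{p ∈ B0 | p ≤ H} + #{h ∈ Bn | P ≤ h} := by
  refine le_trans ?_ (Nat.add_le_add (card_residualPoints_le B0 P H)
    (card_residualHyperplanes_le Bn P H))
  by_contra! hlt
  exact hlt.ne (IH (hB.residue hr hF) hlt.le).card_eq

open Classical in
theorem IsLight.of_residue
    (hpoints : #(residualPoints B0 P H) = #{p ∈ B0 | p ≤ H})
    (hhyperplanes : #(residualHyperplanes Bn P H) = #{h ∈ Bn | P ≤ h})
    (hPG : P ≤ G) (hGH : G ≤ H)
    (hG : IsLight q (residualPoints B0 P H) (residualHyperplanes Bn P H) G) :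
    IsLight q {p ∈ B0 | p ≤ H} Bn G := by
  have hbelow : #{p ∈ {p ∈ B0 | p ≤ H} | p ≤ G} ≤ #{p ∈ residualPoints B0 P H | p ≤ G} := by
    refine card_le_card_of_injOn (· ⊔ P) (fun p hp => ?_)
      ((card_image_iff.1 hpoints).mono (coe_subset.2 (filter_subset _ _)))
    simp only [coe_filter, mem_filter, Set.mem_ofPred_eq] at hp ⊢
    exact ⟨mem_residualPoints.2 ⟨p, hp.1.1, hp.1.2, rfl⟩, sup_le hp.2 hPG⟩
  have habove : #{h ∈ Bn | G ≤ h} ≤ #{h ∈ residualHyperplanes Bn P H | G ≤ h} := by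
    refine card_le_card_of_injOn (· ⊓ H) (fun h hh => ?_)
      ((card_image_iff.1 hhyperplanes).mono fun h hh => ?_)
    · simp only [coe_filter, Set.mem_ofPred_eq] at hh ⊢
      exact ⟨mem_residualHyperplanes.2 ⟨h, hh.1, hPG.trans hh.2, rfl⟩, le_inf hh.2 hGH⟩
    · simp only [coe_filter, Set.mem_ofPred_eq] at hh ⊢
      exact ⟨hh.1, hPG.trans hh.2⟩
  unfold IsLight at hG ⊢
  rw [hpoints] at hG
  exact (Nat.add_le_add (Nat.mul_le_mul_left q hbelow) (Nat.mul_le_mul_right _ habove)).trans hG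

-- Outside `G`, the members of `S` meet `B` in pairwise disjoint sets.
open Classical in
theorem card_mul_add_card_filter_le {S B : Finset L} {c : ℕ}
    (hS : (S : Set L).Pairwise fun x y => x ⊓ y ≤ G) (hc : ∀ z ∈ S, c ≤ #{p ∈ B | p ≤ z}) :
    #S * c + #{p ∈ B | p ≤ G} ≤ #B + #S * #{p ∈ B | p ≤ G} := by
  have hdisj : (S : Set L).PairwiseDisjoint fun z => {p ∈ B | p ≤ z ∧ ¬p ≤ G} :=
    fun x hx y hy hxy => disjoint_left.2 fun p hpx hpy => by
      simp only [mem_filter] at hpx hpy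
      exact hpx.2.2 ((le_inf hpx.2.1 hpy.2.1).trans (hS hx hy hxy))
  have houter : ∑ z ∈ S, #{p ∈ B | p ≤ z ∧ ¬p ≤ G} ≤ #{p ∈ B | ¬p ≤ G} := by
    rw [← card_biUnion hdisj]
    refine card_le_card (biUnion_subset.2 fun z _ p hp => ?_)
    simp only [mem_filter] at hp ⊢
    exact ⟨hp.1, hp.2.2⟩
  have hlower : ∀ z ∈ S, c ≤ #{p ∈ B | p ≤ z ∧ ¬p ≤ G} + #{p ∈ B | p ≤ G} := fun z hz => by
    refine (hc z hz).trans ((card_le_card fun p hp => ?_).trans (card_union_le _ _))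
    simp only [mem_union, mem_filter] at hp ⊢
    tauto
  have hsum := card_nsmul_le_sum S _ c hlower
  rw [sum_add_distrib, sum_const, smul_eq_mul, smul_eq_mul] at hsum
  have hsplit := card_filter_add_card_filter_not (s := B) (· ≤ G)
  omega

namespace IsFreeFlag

variable [IsModularLattice L]

open Classical in
theorem pow_dvd_and_exists_isLight (hF : IsFreeFlag A C B0 Bn P H) (hr : IsProjectiveRank r q)
    (IH : SmallBlockingSetsTight r q k) (hB : IsBlocking r (k + 1) A C B0 Bn)
    (hcard : #{p ∈ B0 | p ≤ H} + #{h ∈ Bn | P ≤ h} ≤ (q + 1) * q ^ k) :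
    q ^ k ∣ #{p ∈ B0 | p ≤ H} ∧ ∃ G, P ≤ G ∧ G ⋖ H ∧ IsLight q {p ∈ B0 | p ≤ H} Bn G := by
  have hpoints := card_residualPoints_le B0 P H
  have hhyperplanes := card_residualHyperplanes_le Bn P H
  have hT := IH (hB.residue hr hF) (by omega)
  have hT_eq := hT.card_eq
  obtain ⟨G, hPG, hGH, hG⟩ := hT.exists_isLight
  have hpoints_eq : #(residualPoints B0 P H) = #{p ∈ B0 | p ≤ H} := by omega
  exact ⟨hpoints_eq ▸ hT.pow_dvd, G, hPG, hGH,
    hG.of_residue hpoints_eq (by omega) hPG hGH.le⟩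

-- Each hyperplane outside `Bn` through the light `G` forms a free flag with `P`, so it contains at
-- least as many points of `B0` as the tight `H` does.
open Classical in
theorem mul_card_points_le [Finite L] (hF : IsFreeFlag A C B0 Bn P H) (hr : IsProjectiveRank r q)
    (IH : SmallBlockingSetsTight r q k) (hB : IsBlocking r (k + 1) A C B0 Bn)
    (hcard : #{p ∈ B0 | p ≤ H} + #{h ∈ Bn | P ≤ h} ≤ (q + 1) * q ^ k) :
    q * #{p ∈ B0 | p ≤ H} ≤ #B0 := by
  cases nonempty_fintype L
  obtain ⟨-, G, hPG, hGH, hG⟩ := hF.pow_dvd_and_exists_isLight hr IH hB hcard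
  have hpencil := hr.card_hyperplanes_of_covBy_of_covBy hGH hF.hyperplane_covBy
  have hmeet : ((hyperplanes G C \ Bn : Finset L) : Set L).Pairwise fun x y => x ⊓ y ≤ G :=
    (hr.pairwise_hyperplanes_inf_le hGH hF.hyperplane_covBy).mono (coe_subset.2 sdiff_subset)
  have hmany : ∀ z ∈ hyperplanes G C \ Bn, #{p ∈ B0 | p ≤ H} ≤ #{p ∈ B0 | p ≤ z} := by
    intro z hz
    simp only [mem_sdiff, mem_hyperplanes] at hz
    have := IH.le_card_add_card hr hB
      ⟨hF.covBy_point, hPG.trans hz.1.1, hz.1.2, hF.point_notMem, hz.2⟩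
    omega
  have hcount := card_mul_add_card_filter_le hmeet hmany
  have hsplit : q + 1 ≤ #(hyperplanes G C \ Bn) + #{h ∈ Bn | G ≤ h} := by
    rw [← hpencil, ← card_sdiff_add_card_inter (hyperplanes G C) Bn]
    gcongr
    intro h hh
    simp only [mem_inter, mem_hyperplanes, mem_filter] at hh ⊢
    exact ⟨hh.2, hh.1.1⟩
  have hle : #(hyperplanes G C \ Bn) ≤ q + 1 := hpencil ▸ card_le_card sdiff_subset
  unfold IsLight at hG
  rw [filter_filter] at hG
  have hfilter : {p ∈ B0 | p ≤ H ∧ p ≤ G} = {p ∈ B0 | p ≤ G} :=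
    filter_congr fun p _ => ⟨And.right, fun h => ⟨h.trans hGH.le, h⟩⟩
  rw [hfilter] at hG
  exact mul_le_of_mul_add_le_add_mul hsplit hle hcount hG

open Classical in
theorem mul_card_hyperplanes_le [Finite L] (hF : IsFreeFlag A C B0 Bn P H)
    (hr : IsProjectiveRank r q)
    (IH : SmallBlockingSetsTight (fun x : Lᵒᵈ => -r (OrderDual.ofDual x)) q k)
    (hB : IsBlocking r (k + 1) A C B0 Bn)
    (hcard : #{p ∈ B0 | p ≤ H} + #{h ∈ Bn | P ≤ h} ≤ (q + 1) * q ^ k) :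
    q * #{h ∈ Bn | P ≤ h} ≤ #Bn := by
  simpa [filter_map, Function.comp_def] using hF.dual.mul_card_points_le hr.dual IH hB.dual
    (by simpa [filter_map, Function.comp_def, add_comm] using hcard)

open Classical in
theorem isTight [Finite L] (hF : IsFreeFlag A C B0 Bn P H) (hr : IsProjectiveRank r q)
    (IH : SmallBlockingSetsTight r q k)
    (IHdual : SmallBlockingSetsTight (fun x : Lᵒᵈ => -r (OrderDual.ofDual x)) q k)
    (hB : IsBlocking r (k + 1) A C B0 Bn) (hsmall : #B0 + #Bn ≤ (q + 1) * q ^ (k + 1))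
    (hcard : #{p ∈ B0 | p ≤ H} + #{h ∈ Bn | P ≤ h} ≤ (q + 1) * q ^ k) :
    IsTight q (k + 1) A C B0 Bn := by
  have hpoints := hF.mul_card_points_le hr IH hB hcard
  have hhyperplanes := hF.mul_card_hyperplanes_le hr IHdual hB hcard
  have hresidue : (q + 1) * q ^ (k + 1) ≤ q * #{p ∈ B0 | p ≤ H} + q * #{h ∈ Bn | P ≤ h} := by
    calc (q + 1) * q ^ (k + 1) = q * ((q + 1) * q ^ k) := by ring
      _ ≤ _ := by
        rw [← mul_add]
        exact Nat.mul_le_mul_left q (IH.le_card_add_card hr hB hF)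
  have hB0 : #B0 = q * #{p ∈ B0 | p ≤ H} := by omega
  refine ⟨by omega, ?_, H, hF.covBy_point.le.trans hF.point_le, hF.hyperplane_covBy, ?_⟩
  · rw [hB0, pow_succ']
    exact Nat.mul_dvd_mul_left q (hF.pow_dvd_and_exists_isLight hr IH hB hcard).1
  · have habove : {h ∈ Bn | H ≤ h} = ∅ := filter_eq_empty_iff.2 fun h hh hHh =>
      hF.hyperplane_notMem <| (hF.hyperplane_covBy.eq_or_eq hHh
        (hB.isHyperplane h hh).2.le).resolve_right (hB.isHyperplane h hh).2.ne ▸ hh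
    simp [IsLight, habove, hB0.ge]

end IsFreeFlag

open Classical in
theorem IsProjectiveRank.exists_hyperplane_card_mul_le [Finite L] [IsModularLattice L]
    (hr : IsProjectiveRank r q) {n : ℕ} (hAC : A ≤ C) (hrank : r C = r A + (n + 1))
    (hB0 : ∀ p ∈ B0, A ⋖ p ∧ p ≤ C) (hBn : #Bn < ∑ i ∈ range (n + 1), q ^ i) :
    ∃ H, A ≤ H ∧ H ⋖ C ∧ H ∉ Bn ∧
      ((∑ i ∈ range (n + 1), q ^ i) - #Bn) * #{p ∈ B0 | p ≤ H} ≤ #B0 * ∑ i ∈ range n, q ^ i := by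
  cases nonempty_fintype L
  have hfree : (∑ i ∈ range (n + 1), q ^ i) - #Bn ≤ #(hyperplanes A C \ Bn) := by
    rw [← hr.card_hyperplanes hAC (by exact_mod_cast hrank)]
    exact le_card_sdiff _ _
  obtain ⟨H, hH, hmin⟩ := exists_min_image (hyperplanes A C \ Bn) (fun H => #{p ∈ B0 | p ≤ H})
    (card_pos.1 (by omega))
  simp only [mem_sdiff, mem_hyperplanes] at hH
  refine ⟨H, hH.1.1, hH.1.2, hH.2, (Nat.mul_le_mul_right _ hfree).trans ?_⟩
  refine card_mul_le_card_mul (fun z p => p ≤ z) hmin fun p hp => ?_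
  have hAp := hr.rank_eq_of_covBy (hB0 p hp).1
  rw [← hr.card_hyperplanes (hB0 p hp).2 (by omega)]
  refine card_le_card fun z hz => ?_
  simp only [mem_bipartiteBelow, mem_sdiff, mem_hyperplanes] at hz ⊢
  exact ⟨hz.2, hz.1.1.2⟩

open Classical in
theorem IsProjectiveRank.mul_le_card_mul_of_forall_point [Finite L] [IsModularLattice L]
    (hr : IsProjectiveRank r q) {n c : ℕ} (hAH : A ≤ H) (hHC : H ⋖ C)
    (hrank : r H = r A + (n + 1)) (hBn : ∀ h ∈ Bn, A ≤ h ∧ h ⋖ C) (hH : H ∉ Bn)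
    (hc : ∀ P, A ⋖ P → P ≤ H → P ∉ B0 → c ≤ #{h ∈ Bn | P ≤ h}) :
    ((∑ i ∈ range (n + 1), q ^ i) - #{p ∈ B0 | p ≤ H}) * c ≤ #Bn * ∑ i ∈ range n, q ^ i := by
  cases nonempty_fintype L
  have hfree : (∑ i ∈ range (n + 1), q ^ i) - #{p ∈ B0 | p ≤ H} ≤
      #(points A H \ {p ∈ B0 | p ≤ H}) := by
    rw [← hr.card_points hAH (by exact_mod_cast hrank)]
    exact le_card_sdiff _ _
  refine (Nat.mul_le_mul_right _ hfree).trans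
    (card_mul_le_card_mul (fun P h => P ≤ h) (fun P hP => ?_) fun h hh => ?_)
  · simp only [mem_sdiff, mem_points, mem_filter] at hP
    exact hc P hP.1.1 hP.1.2 fun hPB => hP.2 ⟨hPB, hP.1.2⟩
  · have hhH := hr.rank_eq_of_covBy
      (inf_covBy_of_covBy_of_ne (hBn h hh).2 hHC (ne_of_mem_of_not_mem hh hH))
    rw [← hr.card_points (le_inf (hBn h hh).1 hAH) (by omega)]
    refine card_le_card fun P hP => ?_
    simp only [mem_bipartiteBelow, mem_sdiff, mem_points] at hP ⊢
    exact ⟨hP.1.1.1, le_inf hP.2 hP.1.1.2⟩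

namespace IsBlocking

open Classical in
theorem exists_isFreeFlag [Finite L] [IsModularLattice L] (hr : IsProjectiveRank r q) (hq : 2 ≤ q)
    (hB : IsBlocking r (k + 1) A C B0 Bn) (hcard : #B0 + #Bn ≤ (q + 1) * q ^ (k + 1)) :
    ∃ P H, IsFreeFlag A C B0 Bn P H ∧
      #{p ∈ B0 | p ≤ H} + #{h ∈ Bn | P ≤ h} ≤ (q + 1) * q ^ k := by
  cases nonempty_fintype L
  have hrank := hB.rank_eq
  push_cast at hrank
  have hgeom := card_sq_add_card_le_geom_sum hq k
  have hpos : 0 < (q + 1) * q ^ k := by positivity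
  have hcard' : #B0 + #Bn ≤ q * ((q + 1) * q ^ k) := hcard.trans_eq (by ring)
  generalize (q + 1) * q ^ k = T at *
  have hBn : #Bn < ∑ i ∈ range (2 * k + 3 + 1), q ^ i := by
    rw [geom_sum_succ, geom_sum_succ]
    have : T ≤ q * ∑ i ∈ range (2 * k + 2), q ^ i := by nlinarith
    nlinarith
  obtain ⟨H, hAH, hHC, hH, hpoints⟩ := hr.exists_hyperplane_card_mul_le (n := 2 * k + 3) hB.le
    (by push_cast; linarith) hB.isPoint hBn
  by_contra! hmany
  have hHrank := hr.rank_eq_of_covBy hHC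
  have hhyperplanes := hr.mul_le_card_mul_of_forall_point (n := 2 * k + 2)
    (c := T + 1 - #{p ∈ B0 | p ≤ H}) hAH hHC (by push_cast; linarith) hB.isHyperplane hH
    fun P hAP hPH hPB0 => by
      have := hmany P H ⟨hAP, hPH, hHC, hPB0, hH⟩
      omega
  have hle : #{p ∈ B0 | p ≤ H} ≤ q * (∑ i ∈ range (2 * k + 2), q ^ i) + 1 := by
    rw [← geom_sum_succ, ← hr.card_points (n := 2 * k + 2 + 1) hAH (by push_cast; linarith)]
    exact card_le_card fun p hp => by
      simp only [mem_filter, mem_points] at hp ⊢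
      exact ⟨(hB.isPoint p hp.1).1, hp.2⟩
  rw [geom_sum_succ, geom_sum_succ] at hpoints hBn
  rw [geom_sum_succ] at hhyperplanes
  exact hcard'.not_gt
    (mul_lt_add_of_tsub_mul_le (by omega) hpos hle hBn.le hgeom hpoints hhyperplanes)

theorem covBy_of_mem_hyperplanes (hr : IsProjectiveRank r q) (hB : IsBlocking r 0 A C B0 Bn) :
    ∀ h ∈ Bn, A ⋖ h := fun h hh => by
  have hrank := hB.rank_eq
  have := hr.rank_eq_of_covBy (hB.isHyperplane h hh).2
  exact (hr.covBy_iff (hB.isHyperplane h hh).1).2 (by omega)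

open Classical in
theorem points_subset_union [Fintype L] (hr : IsProjectiveRank r q)
    (hB : IsBlocking r 0 A C B0 Bn) : points A C ⊆ B0 ∪ Bn := by
  intro x hx
  obtain ⟨hAx, hxC⟩ := mem_points.1 hx
  obtain ⟨p, hp, hpx⟩ | ⟨h, hh, hxh⟩ := hB.blocks x hAx.le hxC
    (by simpa using hr.rank_eq_of_covBy hAx)
  · exact mem_union_left _ (eq_of_covBy_of_covBy_of_le (hB.isPoint p hp).1 hAx hpx ▸ hp)
  · exact mem_union_right _
      (eq_of_covBy_of_covBy_of_le hAx (hB.covBy_of_mem_hyperplanes hr h hh) hxh ▸ hh)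

theorem isLight_of_mem (hr : IsProjectiveRank r q) (hB : IsBlocking r 0 A C B0 Bn)
    (hdisj : Disjoint B0 Bn) (hG : G ∈ Bn) : IsLight q B0 Bn G := by
  classical
  have hAG := hB.covBy_of_mem_hyperplanes hr G hG
  have hbelow : {p ∈ B0 | p ≤ G} = ∅ := filter_eq_empty_iff.2 fun p hp hpG =>
    disjoint_left.1 hdisj hp
      (eq_of_covBy_of_covBy_of_le (hB.isPoint p hp).1 hAG hpG ▸ hG)
  have habove : {h ∈ Bn | G ≤ h} ⊆ {G} := fun h hh => by
    simp only [mem_filter] at hh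
    exact mem_singleton.2
      (eq_of_covBy_of_covBy_of_le hAG (hB.covBy_of_mem_hyperplanes hr h hh.1) hh.2).symm
  simpa [IsLight, hbelow] using Nat.mul_le_mul_right #B0 (card_le_card habove)

theorem isLight_of_eq_empty (hB : IsBlocking r k A C B0 ∅) (hcard : q ≤ #B0)
    (hG : A ⋖ G) : IsLight q B0 ∅ G := by
  classical
  have hbelow : {p ∈ B0 | p ≤ G} ⊆ {G} := fun p hp => by
    simp only [mem_filter] at hp
    exact mem_singleton.2 (eq_of_covBy_of_covBy_of_le (hB.isPoint p hp.1).1 hG hp.2)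
  simpa [IsLight] using (Nat.mul_le_mul_left q (card_le_card hbelow)).trans (by simpa using hcard)

theorem isTight_zero [Finite L] [IsModularLattice L] (hr : IsProjectiveRank r q)
    (hB : IsBlocking r 0 A C B0 Bn) (hcard : #B0 + #Bn ≤ q + 1) : IsTight q 0 A C B0 Bn := by
  classical
  cases nonempty_fintype L
  have hrank := hB.rank_eq
  have hline : #(points A C) = q + 1 := by
    rw [hr.card_points (n := 2) hB.le (by push_cast at hrank ⊢; linarith)]
    simp [sum_range_succ, add_comm]
  have hcover := card_le_card (hB.points_subset_union hr)
  have hunion := card_union_add_card_inter B0 Bn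
  refine ⟨by rw [pow_zero]; omega, by simp, ?_⟩
  obtain rfl | ⟨G, hG⟩ := Bn.eq_empty_or_nonempty
  · obtain ⟨G, hG⟩ := card_pos.1 (hline.symm ▸ q.succ_pos : 0 < #(points A C))
    obtain ⟨hAG, hGC⟩ := mem_points.1 hG
    have hAGrank := hr.rank_eq_of_covBy hAG
    rw [union_empty] at hcover
    exact ⟨G, hAG.le, (hr.covBy_iff hGC).2 (by omega), hB.isLight_of_eq_empty (by omega) hAG⟩
  · have hdisj : Disjoint B0 Bn := disjoint_iff_inter_eq_empty.2 (card_eq_zero.1 (by omega))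
    exact ⟨G, (hB.isHyperplane G hG).1, (hB.isHyperplane G hG).2, hB.isLight_of_mem hr hdisj hG⟩

end IsBlocking

end BlockingSets

-- The order dual occurs in the induction step, so the lattice has to vary.
theorem smallBlockingSetsTight {L : Type u} [Lattice L] [IsModularLattice L] [Finite L]
    {r : L → ℤ} {q : ℕ} (hr : IsProjectiveRank r q) (hq : 2 ≤ q) (k : ℕ) :
    SmallBlockingSetsTight r q k := by
  induction k generalizing L with
  | zero => exact fun A C B0 Bn hB hcard => hB.isTight_zero hr (by simpa using hcard)
  | succ k ih =>
    intro A C B0 Bn hB hcard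
    obtain ⟨P, H, hF, hflag⟩ := hB.exists_isFreeFlag hr hq hcard
    exact hF.isTight hr (ih hr) (ih hr.dual) hB hcard hflag

section Subspaces

open Module

variable {K V : Type*} [Field K] [AddCommGroup V] [Module K V]

theorem ncard_Ioo_bot_top_of_finrank_eq_two [Finite K] (hV : finrank K V = 2) :
    (Set.Ioo (⊥ : Submodule K V) ⊤).ncard = Nat.card K + 1 := by
  have := Module.finite_of_finrank_eq_succ hV
  rw [← Projectivization.card_of_finrank_two K V hV,
    Nat.card_congr (Projectivization.equivSubmodule K V), ← Nat.card_coe_set_eq]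
  refine Nat.card_congr (Equiv.subtypeEquivRight fun W => ⟨fun hW => ?_, fun hW => ?_⟩)
  · have hpos := Submodule.finrank_lt_finrank_of_lt hW.1
    have hlt := Submodule.finrank_lt_finrank_of_lt hW.2
    rw [finrank_bot] at hpos
    rw [finrank_top] at hlt
    omega
  · refine ⟨bot_lt_iff_ne_bot.2 ?_, lt_top_iff_ne_top.2 ?_⟩ <;> rintro rfl <;> simp_all

theorem ncard_Ioo_bot_of_finrank_eq_two [Finite K] {D : Submodule K V} (hD : finrank K D = 2) :
    (Set.Ioo ⊥ D).ncard = Nat.card K + 1 := by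
  let e := Submodule.MapSubtype.orderEmbedding D
  have hbot : e ⊥ = ⊥ := Submodule.map_bot _
  have htop : e ⊤ = D := Submodule.map_subtype_top D
  have hpreimage : e ⁻¹' Set.Ioo ⊥ D = Set.Ioo ⊥ ⊤ := by rw [← e.preimage_Ioo, hbot, htop]
  rw [← ncard_Ioo_bot_top_of_finrank_eq_two hD, ← hpreimage,
    Set.ncard_preimage_of_injective_subset_range e.injective]
  exact fun W hW => ⟨W.comap D.subtype, Submodule.map_comap_eq_of_le (by simpa using hW.2.le)⟩

variable [FiniteDimensional K V]

theorem finrank_eq_add_one_of_covBy {W X : Submodule K V} (h : W ⋖ X) :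
    finrank K X = finrank K W + 1 := by
  obtain ⟨v, hvX, hvW⟩ := SetLike.exists_of_lt h.lt
  have hsup : W ⊔ K ∙ v = X := (h.eq_or_eq le_sup_left (sup_le h.le (by simpa))).resolve_left
    fun hW => hvW (hW ▸ (le_sup_right : K ∙ v ≤ W ⊔ K ∙ v) (Submodule.mem_span_singleton_self v))
  have hv : v ≠ 0 := fun hv => hvW (hv ▸ W.zero_mem)
  have hinf : W ⊓ K ∙ v = ⊥ := ((Submodule.disjoint_span_singleton' hv).2 hvW).eq_bot
  rw [← hsup, ← finrank_span_singleton (K := K) hv, ← Submodule.finrank_sup_add_finrank_inf_eq,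
    hinf, finrank_bot, add_zero]

theorem ncard_Ioo_of_finrank_eq_add_two [Finite K] {W X : Submodule K V} (hWX : W ≤ X)
    (h : finrank K X = finrank K W + 2) : (Set.Ioo W X).ncard = Nat.card K + 1 := by
  obtain ⟨E, hE⟩ := exists_isCompl W
  have hinf : X ⊓ E ⊓ W = ⊥ := (hE.symm.disjoint.mono_left inf_le_right).eq_bot
  have hsup : X ⊓ E ⊔ W = X := by
    rw [inf_sup_assoc_of_le E hWX, hE.symm.sup_eq_top, inf_top_eq]
  have hdim : finrank K (X ⊓ E : Submodule K V) = 2 := by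
    have := Submodule.finrank_sup_add_finrank_inf_eq (X ⊓ E) W
    rw [hsup, hinf, finrank_bot] at this
    omega
  rw [← ncard_Ioo_bot_of_finrank_eq_two hdim, ← Nat.card_coe_set_eq, ← Nat.card_coe_set_eq]
  have := Nat.card_congr (infIooOrderIsoIooSup (X ⊓ E) W).toEquiv
  rw [hinf, hsup] at this
  exact this.symm

theorem isProjectiveRank_finrank [Finite K] :
    IsProjectiveRank (fun W : Submodule K V => (finrank K W : ℤ)) (Nat.card K) where
  strictMono _ _ h := Nat.cast_lt.2 (Submodule.finrank_lt_finrank_of_lt h)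
  rank_eq_of_covBy h := by exact_mod_cast finrank_eq_add_one_of_covBy h
  ncard_Ioo hxz hzy := ncard_Ioo_of_finrank_eq_add_two (hxz.le.trans hzy.le) (by
    rw [finrank_eq_add_one_of_covBy hzy, finrank_eq_add_one_of_covBy hxz])

theorem isBlocking_bot_top [Finite K] {k : ℕ} (hV : finrank K V = 2 * k + 2)
    {B0 Bn : Finset (Submodule K V)} (hB0 : ∀ p ∈ B0, finrank K p = 1)
    (hBn : ∀ H ∈ Bn, finrank K H = 2 * k + 1)
    (hblock : ∀ W : Submodule K V, finrank K W = k + 1 →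
      (∃ p ∈ B0, p ≤ W) ∨ ∃ H ∈ Bn, W ≤ H) :
    IsBlocking (fun W : Submodule K V => (finrank K W : ℤ)) k ⊥ ⊤ B0 Bn where
  le := bot_le
  rank_eq := by simp [hV]
  isPoint p hp := ⟨(isProjectiveRank_finrank.covBy_iff bot_le).2 (by simp [hB0 p hp]), le_top⟩
  isHyperplane H hH := ⟨bot_le, (isProjectiveRank_finrank.covBy_iff le_top).2 (by
    rw [finrank_top, hV, hBn H hH]
    push_cast
    ring)⟩
  blocks W _ _ hW := hblock W (by
    rw [finrank_bot] at hW
    omega)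

end Subspaces

end ProjectiveLattice

theorem stmt_11_general {F V : Type*} [Field F] [Fintype F] [AddCommGroup V] [Module F V] (k : ℕ)
    (hV : Module.finrank F V = 2 * k + 2) (B0 Bn : Set (Submodule F V))
    (hB0 : ∀ p ∈ B0, Module.finrank F p = 1)
    (hBn : ∀ H ∈ Bn, Module.finrank F H = 2 * k + 1)
    (hblock : ∀ W : Submodule F V, Module.finrank F W = k + 1 →
      (∃ p ∈ B0, p ≤ W) ∨ (∃ H ∈ Bn, W ≤ H))
    (hsize : B0.ncard + Bn.ncard ≤ (Fintype.card F + 1) * (Fintype.card F) ^ k) :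
    B0.ncard + Bn.ncard = (Fintype.card F + 1) * (Fintype.card F) ^ k ∧
      (Fintype.card F) ^ k ∣ B0.ncard := by
  have := Module.finite_of_finrank_eq_succ hV
  have := Module.finite_of_finite F (M := V)
  lift B0 to Finset (Submodule F V) using B0.toFinite
  lift Bn to Finset (Submodule F V) using Bn.toFinite
  simp only [Set.ncard_coe_finset, ← Nat.card_eq_fintype_card] at hsize ⊢
  have htight := ProjectiveLattice.smallBlockingSetsTight
    ProjectiveLattice.isProjectiveRank_finrank Finite.one_lt_card k
    (ProjectiveLattice.isBlocking_bot_top hV hB0 hBn hblock) hsize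
  exact ⟨htight.card_eq, htight.pow_dvd⟩

/-- Let `B = B0 ∪ Bn` be a blocking set of points and hyperplanes
with respect to `k`-spaces in `PG(2k+1,q)` with `|B| = (q+1)·q^k`.  Then `q^k`
divides `|B0|`. -/
theorem stmt_11 {F : Type} [Field F] [Fintype F] (k : ℕ) (hk : 1 ≤ k)
    (B0 Bn : Set (Submodule F (Fin (2 * k + 2) → F)))
    (hB0 : ∀ p ∈ B0, Module.finrank F p = 1)
    (hBn : ∀ H ∈ Bn, Module.finrank F H = 2 * k + 1)
    (hblock : ∀ W : Submodule F (Fin (2 * k + 2) → F), Module.finrank F W = k + 1 →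
      (∃ p ∈ B0, p ≤ W) ∨ (∃ H ∈ Bn, W ≤ H))
    (hsize : B0.ncard + Bn.ncard = (Fintype.card F + 1) * (Fintype.card F) ^ k) :
    (Fintype.card F) ^ k ∣ B0.ncard := by
  exact (stmt_11_general k (by simp) B0 Bn hB0 hBn hblock hsize.le).2
end

section
/- Let q be a prime power, n ≥ 1, and let S be a nonempty set of points of PG(n,q) such that no point P outside S lies simultaneously on a tangent line to S and on a secant line to S. Then the set Σ consisting of S together with all points P outside S that lie on no tangent line to S is (the point set of) a projective subspace of PG(n,q), and its projective dimension equals the least integer m with |S| ≤ θ_m. -/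
/-- `theta q m = (q^(m+1) - 1)/(q - 1)` is the number of points of `PG(m,q)`. -/
def theta (q m : ℕ) : ℕ := (q ^ (m + 1) - 1) / (q - 1)

/-!
The closure `Σ` of `S` is the span of `S`. A point `P ∈ Σ` outside `S` lies on no tangent line, so
for every `s ∈ S` the line `Ps` contains a second point of `S`; hence `P ∈ ⟨S⟩`. Conversely, the
line joining `A ∈ Σ` to `s ∈ S` is, by the same remark, a secant line, and points on a secant line
are in `Σ` by hypothesis; adjoining the points of `S` one after another therefore never leads out
of `Σ`.

For the dimension, let `s ∈ S` and let `H` be a hyperplane of `⟨S⟩` not through `s`. The lines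
through `s` in `⟨S⟩` correspond to the points of `H`, and each of them contains a point of `S`
other than `s`. So `|S|` exceeds the number of points of `H`.
-/

section ModularLattice

variable {α : Type*} [Lattice α] [OrderBot α]

theorem sup_eq_sup_of_isAtom_of_le_sup [IsUpperModularLattice α] {a b c : α} (ha : IsAtom a)
    (hc : c ≤ a ⊔ b) (hcb : ¬c ≤ b) : c ⊔ b = a ⊔ b := by
  have hab : a ⊓ b = ⊥ :=
    (not_not.1 fun hd ↦ hcb (hc.trans (sup_le (ha.not_disjoint_iff_le.1 hd) le_rfl))).eq_bot
  have hcov : b ⋖ a ⊔ b := covBy_sup_of_inf_covBy_left (hab ▸ ha.bot_covBy)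
  exact (hcov.eq_or_eq le_sup_right (sup_le hc le_sup_right)).resolve_left
    fun h ↦ hcb (sup_eq_right.1 h)

theorem eq_of_sup_eq_sup_of_disjoint [IsModularLattice α] {a b c d : α} (hd : Disjoint c d)
    (ha : a ≤ d) (hb : b ≤ d) (h : a ⊔ c = b ⊔ c) : a = b :=
  calc
    a = (a ⊔ c) ⊓ d := by rw [sup_inf_assoc_of_le _ ha, hd.eq_bot, sup_bot_eq]
    _ = (b ⊔ c) ⊓ d := by rw [h]
    _ = b := by rw [sup_inf_assoc_of_le _ hb, hd.eq_bot, sup_bot_eq]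

end ModularLattice

section Points

open Module Submodule

variable {K V : Type*} [DivisionRing K] [AddCommGroup V] [Module K V]

theorem eq_of_le_of_finrank_eq_one {P Q : Submodule K V} (hP : finrank K P = 1)
    (hQ : finrank K Q = 1) (h : P ≤ Q) : P = Q :=
  (isAtom_iff_finrank_eq_one.2 hQ).le_iff_eq (isAtom_iff_finrank_eq_one.2 hP).ne_bot |>.1 h

theorem disjoint_of_finrank_eq_one {P Q : Submodule K V} (hP : finrank K P = 1)
    (hQ : finrank K Q = 1) (h : P ≠ Q) : Disjoint P Q :=
  (isAtom_iff_finrank_eq_one.2 hP).disjoint_of_ne (isAtom_iff_finrank_eq_one.2 hQ) h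

theorem finrank_sup_of_disjoint {U W : Submodule K V} [FiniteDimensional K U]
    [FiniteDimensional K W] (h : Disjoint U W) :
    finrank K ↑(U ⊔ W) = finrank K U + finrank K W := by
  rw [← finrank_sup_add_finrank_inf_eq, h.eq_bot, finrank_bot, add_zero]

theorem finrank_sup_eq_two {P Q : Submodule K V} (hP : finrank K P = 1) (hQ : finrank K Q = 1)
    (h : P ≠ Q) : finrank K ↑(P ⊔ Q) = 2 := by
  have : FiniteDimensional K P := .of_finrank_pos (by omega)
  have : FiniteDimensional K Q := .of_finrank_pos (by omega)
  rw [finrank_sup_of_disjoint (disjoint_of_finrank_eq_one hP hQ h), hP, hQ]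

theorem sup_eq_sup_of_finrank_eq_one {P s t : Submodule K V} (hP : finrank K P = 1)
    (hs : finrank K s = 1) (ht : finrank K t = 1) (hts : t ≠ s) (htP : t ≤ P ⊔ s) :
    t ⊔ s = P ⊔ s :=
  sup_eq_sup_of_isAtom_of_le_sup (isAtom_iff_finrank_eq_one.2 hP) htP
    fun h ↦ hts (eq_of_le_of_finrank_eq_one ht hs h)

theorem exists_disjoint_finrank_add_eq {U W : Submodule K V} [FiniteDimensional K W] (h : U ≤ W) :
    ∃ H ≤ W, Disjoint U H ∧ finrank K U + finrank K H = finrank K W := by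
  obtain ⟨H, hdisj, hsup⟩ := IsModularLattice.exists_disjoint_and_sup_eq h
  have hHW : H ≤ W := hsup ▸ le_sup_right
  have := finiteDimensional_of_le h
  have := finiteDimensional_of_le hHW
  exact ⟨H, hHW, hdisj, by rw [← finrank_sup_of_disjoint hdisj, hsup]⟩

/-- The points of the projective subspace given by `W`. -/
def pointsIn (W : Submodule K V) : Set (Submodule K V) := {P | finrank K P = 1 ∧ P ≤ W}

theorem ncard_pointsIn [Finite K] (W : Submodule K V) :
    (pointsIn W).ncard = ∑ i ∈ Finset.range (finrank K W), Nat.card K ^ i := by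
  have himage : pointsIn W = Submodule.map W.subtype '' {p | finrank K p = 1} := by
    ext P
    constructor
    · rintro ⟨hP, hPW⟩
      refine ⟨P.comap W.subtype, ?_, map_comap_subtype W P |>.trans (inf_eq_right.2 hPW)⟩
      exact (comapSubtypeEquivOfLe hPW).finrank_eq.trans hP
    · rintro ⟨p, hp, rfl⟩
      exact ⟨(finrank_map_subtype_eq W p).trans hp, map_subtype_le W p⟩
  rw [himage, Set.ncard_image_of_injective _ (map_injective_of_injective W.subtype_injective),
    ← Projectivization.card_of_finrank K W rfl]
  exact (Nat.card_congr (Projectivization.equivSubmodule K W)).symm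

theorem pointsIn_finite [Finite K] (W : Submodule K V) [FiniteDimensional K W] :
    (pointsIn W).Finite := by
  have : Finite W := Module.finite_of_finite K
  have : Finite (Set.Iic W) := .of_equiv _ W.mapIic.toEquiv
  exact (Set.toFinite (Set.Iic W)).subset fun _ hP ↦ hP.2

theorem theta_eq_geomSum {q : ℕ} (hq : 2 ≤ q) (m : ℕ) :
    theta q m = ∑ i ∈ Finset.range (m + 1), q ^ i :=
  (Nat.geomSum_eq hq _).symm

theorem isLeast_le_theta {q m N : ℕ} (hq : 2 ≤ q) (hlt : ∑ i ∈ Finset.range m, q ^ i < N)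
    (hle : N ≤ ∑ i ∈ Finset.range (m + 1), q ^ i) : IsLeast {k | N ≤ theta q k} m := by
  refine ⟨hle.trans_eq (theta_eq_geomSum hq m).symm, fun k (hk : N ≤ theta q k) ↦ ?_⟩
  rw [theta_eq_geomSum hq] at hk
  by_contra! hkm
  have hmono : ∑ i ∈ Finset.range (k + 1), q ^ i ≤ ∑ i ∈ Finset.range m, q ^ i :=
    Finset.sum_le_sum_of_subset (Finset.range_mono hkm)
  omega

theorem geomSum_lt_ncard_of_lines_through [Finite K] {S : Set (Submodule K V)}
    {s W : Submodule K V} {m : ℕ} (hpts : ∀ p ∈ S, finrank K p = 1) (hfin : S.Finite) (hs : s ∈ S)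
    (hsW : s ≤ W) (hW : finrank K W = m + 1)
    (hlines : ∀ P ∈ pointsIn W, P ≠ s → ∃ t ∈ S, t ≠ s ∧ t ≤ P ⊔ s) :
    ∑ i ∈ Finset.range m, Nat.card K ^ i < S.ncard := by
  have : FiniteDimensional K W := .of_finrank_pos (by omega)
  obtain ⟨H, hHW, hsH, hadd⟩ := exists_disjoint_finrank_add_eq hsW
  have hH : finrank K H = m := by rw [hpts s hs, hW] at hadd; omega
  have hsecond : ∀ P ∈ pointsIn H, ∃ t ∈ S \ {s}, t ⊔ s = P ⊔ s := by
    rintro P ⟨hP, hPH⟩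
    have hPs : P ≠ s := by
      rintro rfl
      exact (isAtom_iff_finrank_eq_one.2 hP).ne_bot (hsH.eq_bot_of_le hPH)
    obtain ⟨t, ht, hts, htP⟩ := hlines P ⟨hP, hPH.trans hHW⟩ hPs
    exact ⟨t, ⟨ht, hts⟩, sup_eq_sup_of_finrank_eq_one hP (hpts s hs) (hpts t ht) hts htP⟩
  choose! second hsecond_mem hsecond_sup using hsecond
  have hinj : Set.InjOn second (pointsIn H) := fun P hP Q hQ h ↦
    eq_of_sup_eq_sup_of_disjoint hsH hP.2 hQ.2 <| by
      rw [← hsecond_sup P hP, ← hsecond_sup Q hQ, h]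
  calc
    ∑ i ∈ Finset.range m, Nat.card K ^ i = (pointsIn H).ncard := by rw [ncard_pointsIn, hH]
    _ ≤ (S \ {s}).ncard := Set.ncard_le_ncard_of_injOn second hsecond_mem hinj hfin.sdiff
    _ < S.ncard := Set.ncard_sdiff_singleton_lt_of_mem hs hfin

end Points

section TangentFreeHull

open Module Submodule

variable {K V : Type*} [DivisionRing K] [AddCommGroup V] [Module K V]

/-- `P` lies on a tangent line to `S`. -/
def OnTangent (S : Set (Submodule K V)) (P : Submodule K V) : Prop :=
  ∃ l : Submodule K V, finrank K l = 2 ∧ P ≤ l ∧ {p ∈ S | p ≤ l}.ncard = 1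

/-- `P` lies on a secant line to `S`. Having at least two points in common is expressed by
`Set.Nontrivial`, because `Set.ncard` is `0` on an infinite set. -/
def OnSecant (S : Set (Submodule K V)) (P : Submodule K V) : Prop :=
  ∃ l : Submodule K V, finrank K l = 2 ∧ P ≤ l ∧ {p ∈ S | p ≤ l}.Nontrivial

/-- No point outside `S` lies both on a tangent line and on a secant line to `S`. -/
def TangentSecantSeparated (S : Set (Submodule K V)) : Prop :=
  ∀ P : Submodule K V, finrank K P = 1 → P ∉ S → ¬(OnTangent S P ∧ OnSecant S P)

/-- The set `Σ` of the paper: `S` together with the points outside `S` on no tangent line to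
`S`. -/
def tangentFreeHull (S : Set (Submodule K V)) : Set (Submodule K V) :=
  S ∪ {P | finrank K P = 1 ∧ P ∉ S ∧ ¬OnTangent S P}

variable {S : Set (Submodule K V)}

theorem finrank_eq_one_of_mem_tangentFreeHull (hpts : ∀ p ∈ S, finrank K p = 1)
    {P : Submodule K V} (hP : P ∈ tangentFreeHull S) : finrank K P = 1 :=
  hP.elim (hpts P) And.left

theorem TangentSecantSeparated.mem_tangentFreeHull (hS : TangentSecantSeparated S)
    {P : Submodule K V} (hP : finrank K P = 1) (hsec : OnSecant S P) : P ∈ tangentFreeHull S :=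
  or_iff_not_imp_left.2 fun hPS ↦ ⟨hP, hPS, fun htan ↦ hS P hP hPS ⟨htan, hsec⟩⟩

theorem exists_mem_ne_le_sup_of_mem_tangentFreeHull (hpts : ∀ p ∈ S, finrank K p = 1)
    {A s : Submodule K V} (hA : A ∈ tangentFreeHull S) (hs : s ∈ S) (hAs : A ≠ s) :
    ∃ t ∈ S, t ≠ s ∧ t ≤ A ⊔ s := by
  rcases hA with hA | ⟨hA, -, htan⟩
  · exact ⟨A, hA, hAs, le_sup_left⟩
  · by_contra! honly
    refine htan ⟨A ⊔ s, finrank_sup_eq_two hA (hpts s hs) hAs, le_sup_left, ?_⟩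
    refine Set.ncard_eq_one.2 ⟨s, Set.eq_singleton_iff_unique_mem.2 ⟨⟨hs, le_sup_right⟩, ?_⟩⟩
    rintro t ⟨ht, htl⟩
    by_contra hts
    exact honly t ht hts htl

theorem TangentSecantSeparated.mem_tangentFreeHull_of_le_sup (hS : TangentSecantSeparated S)
    (hpts : ∀ p ∈ S, finrank K p = 1) {A s P : Submodule K V} (hA : A ∈ tangentFreeHull S)
    (hs : s ∈ S) (hP : finrank K P = 1) (hPl : P ≤ A ⊔ s) : P ∈ tangentFreeHull S := by
  have hA₁ := finrank_eq_one_of_mem_tangentFreeHull hpts hA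
  rcases eq_or_ne A s with rfl | hAs
  · rw [sup_idem] at hPl
    rwa [eq_of_le_of_finrank_eq_one hP hA₁ hPl]
  · obtain ⟨t, ht, hts, htl⟩ := exists_mem_ne_le_sup_of_mem_tangentFreeHull hpts hA hs hAs
    exact hS.mem_tangentFreeHull hP ⟨A ⊔ s, finrank_sup_eq_two hA₁ (hpts s hs) hAs, hPl,
      t, ⟨ht, htl⟩, s, ⟨hs, le_sup_right⟩, hts⟩

theorem le_sSup_of_mem_tangentFreeHull (hpts : ∀ p ∈ S, finrank K p = 1) (hne : S.Nonempty)
    {P : Submodule K V} (hP : P ∈ tangentFreeHull S) : P ≤ sSup S := by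
  obtain ⟨s, hs⟩ := hne
  rcases eq_or_ne P s with rfl | hPs
  · exact le_sSup hs
  · obtain ⟨t, ht, hts, htl⟩ := exists_mem_ne_le_sup_of_mem_tangentFreeHull hpts hP hs hPs
    have hP₁ := finrank_eq_one_of_mem_tangentFreeHull hpts hP
    calc
      P ≤ P ⊔ s := le_sup_left
      _ = t ⊔ s := (sup_eq_sup_of_finrank_eq_one hP₁ (hpts s hs) (hpts t ht) hts htl).symm
      _ ≤ sSup S := sup_le (le_sSup ht) (le_sSup hs)

theorem TangentSecantSeparated.exists_add_mem_of_mem_tangentFreeHull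
    (hS : TangentSecantSeparated S) (hpts : ∀ p ∈ S, finrank K p = 1) {A s : Submodule K V}
    (hA : A ∈ tangentFreeHull S) (hs : s ∈ S) {v w : V} (hv : v ∈ s) (hw : w ∈ A) :
    ∃ B ∈ tangentFreeHull S, v + w ∈ B := by
  by_cases h0 : v + w = 0
  · exact ⟨A, hA, h0 ▸ A.zero_mem⟩
  · have hline : K ∙ (v + w) ≤ A ⊔ s := by
      rw [span_singleton_le_iff_mem, add_comm]
      exact add_mem_sup hw hv
    have hmem : K ∙ (v + w) ∈ tangentFreeHull S :=
      hS.mem_tangentFreeHull_of_le_sup hpts hA hs (finrank_span_singleton h0) hline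
    exact ⟨K ∙ (v + w), hmem, mem_span_singleton_self _⟩

theorem TangentSecantSeparated.exists_mem_tangentFreeHull_of_mem_sSup
    (hS : TangentSecantSeparated S) (hpts : ∀ p ∈ S, finrank K p = 1) (hne : S.Nonempty) {v : V}
    (hv : v ∈ sSup S) : ∃ A ∈ tangentFreeHull S, v ∈ A := by
  rw [sSup_eq_iSup'] at hv
  -- Quantifying over `w` lets the induction add one vector of `⋃ S` at a time.
  have hadd : ∀ w, (∃ A ∈ tangentFreeHull S, w ∈ A) → ∃ A ∈ tangentFreeHull S, v + w ∈ A :=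
    iSup_induction _ hv
      (motive := fun v ↦ ∀ w, (∃ A ∈ tangentFreeHull S, w ∈ A) →
        ∃ A ∈ tangentFreeHull S, v + w ∈ A)
      (fun s v hv w ⟨A, hA, hw⟩ ↦ hS.exists_add_mem_of_mem_tangentFreeHull hpts hA s.2 hv hw)
      (fun w hw ↦ (zero_add w).symm ▸ hw)
      (fun v₁ v₂ h₁ h₂ w hw ↦ (add_assoc v₁ v₂ w).symm ▸ h₁ _ (h₂ w hw))
  obtain ⟨s, hs⟩ := hne
  simpa only [add_zero] using hadd 0 ⟨s, .inl hs, s.zero_mem⟩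

theorem TangentSecantSeparated.tangentFreeHull_eq_pointsIn_sSup (hS : TangentSecantSeparated S)
    (hpts : ∀ p ∈ S, finrank K p = 1) (hne : S.Nonempty) :
    tangentFreeHull S = pointsIn (sSup S) := by
  refine Set.Subset.antisymm (fun P hP ↦ ⟨finrank_eq_one_of_mem_tangentFreeHull hpts hP,
    le_sSup_of_mem_tangentFreeHull hpts hne hP⟩) ?_
  rintro P ⟨hP, hPS⟩
  obtain ⟨v, hvP, hv0⟩ := exists_mem_ne_zero_of_ne_bot (isAtom_iff_finrank_eq_one.2 hP).ne_bot
  obtain ⟨A, hA, hvA⟩ := hS.exists_mem_tangentFreeHull_of_mem_sSup hpts hne (hPS hvP)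
  have hPA : P = A := by
    by_contra hPA
    have hA₁ := finrank_eq_one_of_mem_tangentFreeHull hpts hA
    have hdisj := disjoint_of_finrank_eq_one hP hA₁ hPA
    exact hv0 (disjoint_def.1 hdisj v hvP hvA)
  rwa [hPA]

theorem stmt_13_general [Finite K] (hS : TangentSecantSeparated S)
    (hpts : ∀ p ∈ S, finrank K p = 1) (hne : S.Nonempty) (hfin : S.Finite) :
    ∃ (W : Submodule K V) (m : ℕ), IsLeast {m | S.ncard ≤ theta (Nat.card K) m} m ∧
      finrank K W = m + 1 ∧ tangentFreeHull S = pointsIn W := by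
  have hhull := hS.tangentFreeHull_eq_pointsIn_sSup hpts hne
  obtain ⟨s, hs⟩ := hne
  have : Finite S := hfin
  have (p : S) : FiniteDimensional K p := .of_finrank_pos (by rw [hpts p p.2]; exact one_pos)
  have : FiniteDimensional K ↑(sSup S) := by rw [sSup_eq_iSup']; infer_instance
  have hpos : 1 ≤ finrank K ↑(sSup S) := (hpts s hs).symm.trans_le (finrank_mono (le_sSup hs))
  obtain ⟨m, hm⟩ := Nat.exists_eq_add_of_le' hpos
  refine ⟨sSup S, m, isLeast_le_theta Finite.one_lt_card ?_ ?_, hm, hhull⟩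
  · exact geomSum_lt_ncard_of_lines_through hpts hfin hs (le_sSup hs) hm fun P hP ↦
      exists_mem_ne_le_sup_of_mem_tangentFreeHull hpts (hhull ▸ hP) hs
  · rw [← hm, ← ncard_pointsIn]
    exact Set.ncard_le_ncard (fun p hp ↦ ⟨hpts p hp, le_sSup hp⟩) (pointsIn_finite _)

end TangentFreeHull

/-- Let `S` be a nonempty set of points of `PG(n,q)` such that no
point outside `S` lies both on a tangent line to `S` and on a secant line to `S`.
Then `S` together with all points outside `S` lying on no tangent line to `S` is the
point set of a projective subspace whose projective dimension is the least `m` with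
`|S| ≤ θ_m`. -/
theorem stmt_13 {F : Type} [Field F] [Fintype F] (n : ℕ) (hn : 1 ≤ n)
    (S : Set (Submodule F (Fin (n + 1) → F)))
    (hSpts : ∀ p ∈ S, Module.finrank F p = 1)
    (hSne : S.Nonempty)
    (hS : ∀ P : Submodule F (Fin (n + 1) → F), Module.finrank F P = 1 → P ∉ S →
      ¬ ((∃ l : Submodule F (Fin (n + 1) → F), Module.finrank F l = 2 ∧ P ≤ l ∧ {p ∈ S | p ≤ l}.ncard = 1) ∧
         (∃ l : Submodule F (Fin (n + 1) → F), Module.finrank F l = 2 ∧ P ≤ l ∧ 2 ≤ {p ∈ S | p ≤ l}.ncard))) :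
    ∃ (W : Submodule F (Fin (n + 1) → F)) (m : ℕ),
      IsLeast {m : ℕ | S.ncard ≤ theta (Fintype.card F) m} m ∧
      Module.finrank F W = m + 1 ∧
      S ∪ {P : Submodule F (Fin (n + 1) → F) | Module.finrank F P = 1 ∧ P ∉ S ∧
          ∀ l : Submodule F (Fin (n + 1) → F), Module.finrank F l = 2 → P ≤ l → {p ∈ S | p ≤ l}.ncard ≠ 1} =
        {P : Submodule F (Fin (n + 1) → F) | Module.finrank F P = 1 ∧ P ≤ W} := by
  have hsep : TangentSecantSeparated S := fun P hP hPS ⟨htan, l, hl, hPl, hsec⟩ ↦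
    hS P hP hPS ⟨htan, l, hl, hPl, Set.one_lt_ncard_iff_nontrivial.2 hsec⟩
  simpa [tangentFreeHull, OnTangent, pointsIn] using
    stmt_13_general hsep hSpts hSne (Set.toFinite S)
end

section
/- Let q be a prime power, k ≥ 1, and n = 2k+1. Let B = B_0 ∪ B_{n-1} be a blocking set with respect to k-spaces in PG(2k+1,q) consisting of points and hyperplanes. Assume that B_0 is contained in a (k+1)-space Σ and let P be a point of Σ not in B_0. Let B_P be the set of hyperplanes of B_{n-1} that contain P but do not contain Σ. Then at least one of the following holds: (1) there exists a k-space ρ ⊂ Σ such that B_P contains every hyperplane π with π ∩ Σ = ρ, in which case |B_P| ≥ q^k; or (2) |B_P| ≥ q^{k-1}·(q+1). -/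
/-!
Hyperplanes of `V` are kernels of functionals, so we dualise: in `E = P^⊥ ≤ V^*`, the functionals
whose kernel lies in `B_P` form a set `X`, closed under nonzero scalars, that meets every complement
of `Y = Σ^⊥`. The claim becomes: either `X` contains `Z \ Y` for some `Z` covering `Y`, or
`(q - 1) (q + 1) |Y| ≤ q |X|`.

Induct on `dim E` and suppose that both alternatives fail. Every `N` covering `Y` has a vector
`e ∉ X ∪ Y`, and the image of `X` in `E / ⟨e⟩` still meets every complement of the image of `Y`; by
induction there is `M` covering `N` such that `X` has at least `(q - 1) |Y|` vectors in `M \ N`.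
For different `M` these sets of vectors are disjoint, and two of them already exceed the bound;
hence `M` is the same for all `N ≤ M`. Counting the pairs `(e, x)` with `e ∈ M \ Y`, `x ∈ X ∩ M`
and `x ∉ Y + ⟨e⟩` now yields the second alternative after all.
-/

open Module Submodule

section Blocking

variable {K E : Type*} [Field K] [AddCommGroup E] [Module K E] {X : Set E} {Y N M : Submodule K E}

/-- The set of nonzero vectors representing the points of a set in the projective space of `E` that
meets every complement of the subspace `Y`. -/
structure BlocksComplements (Y : Submodule K E) (X : Set E) : Prop where
  zero_notMem : 0 ∉ X
  smul_mem : ∀ {c : K} {x : E}, c ≠ 0 → x ∈ X → c • x ∈ X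
  exists_mem : ∀ U, IsCompl Y U → ∃ x ∈ X, x ∈ U

lemma finrank_eq_add_one_of_covBy [FiniteDimensional K E] (h : N ⋖ M) :
    finrank K M = finrank K N + 1 := by
  have hquot : finrank K (M ⧸ N.submoduleOf M) = 1 :=
    isSimpleModule_iff_finrank_eq_one.mp ((covBy_iff_quot_is_simple h.le).mp h)
  have hsub : finrank K (N.submoduleOf M) = finrank K N :=
    (submoduleOfEquivOfLe h.le).finrank_eq
  have := (N.submoduleOf M).finrank_quotient_add_finrank
  omega

lemma natCard_eq_mul_of_covBy [FiniteDimensional K E] (h : N ⋖ M) :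
    Nat.card M = Nat.card K * Nat.card N := by
  rw [natCard_eq_pow_finrank (K := K), natCard_eq_pow_finrank (K := K) (V := N),
    finrank_eq_add_one_of_covBy h, pow_succ']

lemma ncard_sdiff_of_covBy [Finite E] (h : N ⋖ M) :
    ((M : Set E) \ N).ncard = (Nat.card K - 1) * Nat.card N := by
  have hM : (M : Set E).ncard = Nat.card K * Nat.card N := natCard_eq_mul_of_covBy h
  have hN : (N : Set E).ncard = Nat.card N := rfl
  rw [Set.ncard_sdiff h.le, hM, hN, Nat.sub_one_mul]

lemma BlocksComplements.image_mkQ (hX : BlocksComplements Y X) {e : E} (heY : e ∉ Y)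
    (heX : e ∉ X) : BlocksComplements (Y.map (K ∙ e).mkQ) ((K ∙ e).mkQ '' X) where
  zero_notMem := by
    rintro ⟨x, hx, hx0⟩
    obtain ⟨c, rfl⟩ := mem_span_singleton.mp ((Quotient.mk_eq_zero _).mp hx0)
    have hc : c ≠ 0 := by rintro rfl; exact hX.zero_notMem (zero_smul K e ▸ hx)
    exact heX (inv_smul_smul₀ hc e ▸ hX.smul_mem (inv_ne_zero hc) hx)
  smul_mem := by
    rintro c _ hc ⟨x, hx, rfl⟩
    exact ⟨c • x, hX.smul_mem hc hx, map_smul _ _ _⟩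
  exists_mem U hU := by
    have he : K ∙ e ≤ U.comap (K ∙ e).mkQ := le_comap_mkQ _ _
    have hdisj : Disjoint Y (U.comap (K ∙ e).mkQ) := by
      rw [disjoint_def]
      intro x hxY hxU
      have hx0 : (K ∙ e).mkQ x = 0 := disjoint_def.mp hU.disjoint _ (mem_map_of_mem hxY) hxU
      exact disjoint_def.mp (disjoint_span_singleton_of_notMem heY) x hxY
        ((Quotient.mk_eq_zero _).mp hx0)
    have hcodisj : Y ⊔ U.comap (K ∙ e).mkQ = ⊤ := by
      have hmap : (Y ⊔ U.comap (K ∙ e).mkQ).map (K ∙ e).mkQ = ⊤ := by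
        rw [Submodule.map_sup, map_comap_eq_of_surjective (mkQ_surjective _), hU.sup_eq_top]
      rw [← comap_top (K ∙ e).mkQ, ← hmap, comap_map_mkQ, right_eq_sup]
      exact he.trans le_sup_right
    obtain ⟨x, hxX, hxU⟩ := hX.exists_mem _ ⟨hdisj, codisjoint_iff.mpr hcodisj⟩
    exact ⟨_, Set.mem_image_of_mem _ hxX, hxU⟩

lemma natCard_map_mkQ_span_singleton {e : E} (heY : e ∉ Y) :
    Nat.card (Y.map (K ∙ e).mkQ) = Nat.card Y := by
  have hinj : Set.InjOn (K ∙ e).mkQ Y :=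
    LinearMap.injOn_of_disjoint_ker le_rfl (by simpa using disjoint_span_singleton_of_notMem heY)
  exact hinj.ncard_image

lemma exists_covBy_le_ncard_of_sdiff_subset_image_mkQ [Finite E] {e : E} (heY : e ∉ Y)
    {Z : Submodule K (E ⧸ K ∙ e)} (hZ : Y.map (K ∙ e).mkQ ⋖ Z)
    (hZX : (Z : Set (E ⧸ K ∙ e)) \ Y.map (K ∙ e).mkQ ⊆ (K ∙ e).mkQ '' X) :
    ∃ M, K ∙ e ⊔ Y ⋖ M ∧
      (Nat.card K - 1) * Nat.card Y ≤ (X ∩ (M \ (K ∙ e ⊔ Y : Submodule K E))).ncard := by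
  have hcomap : (Y.map (K ∙ e).mkQ).comap (K ∙ e).mkQ = K ∙ e ⊔ Y := comap_map_mkQ _ _
  refine ⟨Z.comap (K ∙ e).mkQ, hcomap ▸ comap_covBy_of_surjective (mkQ_surjective _) hZ, ?_⟩
  have : Finite (E ⧸ K ∙ e) := Finite.of_surjective _ (mkQ_surjective _)
  rw [← natCard_map_mkQ_span_singleton heY, ← ncard_sdiff_of_covBy hZ, ← hcomap]
  refine (Set.ncard_le_ncard ?_).trans (Set.ncard_image_le (f := (K ∙ e).mkQ))
  rintro z hz
  obtain ⟨x, hxX, rfl⟩ := hZX hz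
  exact Set.mem_image_of_mem _ ⟨hxX, hz⟩

lemma le_ncard_inter_sdiff_of_covBy [Finite E] {N' : Submodule K E}
    (hlines : ∀ N, Y ⋖ N → ∃ M, N ⋖ M ∧
      (Nat.card K - 1) * Nat.card Y ≤ (X ∩ (M \ N)).ncard)
    (hX : Nat.card K * X.ncard < (Nat.card K + 1) * ((Nat.card K - 1) * Nat.card Y))
    (hYN : Y ⋖ N) (hNM : N ⋖ M) (hM : (Nat.card K - 1) * Nat.card Y ≤ (X ∩ (M \ N)).ncard)
    (hYN' : Y ⋖ N') (hN'M : N' ≤ M) :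
    (Nat.card K - 1) * Nat.card Y ≤ (X ∩ (M \ N')).ncard := by
  obtain ⟨M', hN'M', hM'⟩ := hlines N' hYN'
  obtain rfl | hne := eq_or_ne M' M
  · exact hM'
  have hinf : M' ⊓ M = N' := by
    refine (hN'M'.eq_or_eq (le_inf hN'M'.le hN'M) inf_le_left).resolve_right fun h ↦ hne ?_
    apply eq_of_le_of_finrank_eq (inf_eq_left.mp h)
    simp only [finrank_eq_add_one_of_covBy hN'M', finrank_eq_add_one_of_covBy hYN',
      finrank_eq_add_one_of_covBy hNM, finrank_eq_add_one_of_covBy hYN]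
  have hdisj : Disjoint (X ∩ ((M : Set E) \ N)) (X ∩ ((M' : Set E) \ N')) :=
    Set.disjoint_left.mpr fun x hx hx' ↦ hx'.2.2 (hinf ▸ ⟨hx'.2.1, hx.2.1⟩)
  have htwice : 2 * ((Nat.card K - 1) * Nat.card Y) ≤ X.ncard := by
    have hunion := Set.ncard_union_eq hdisj
    have hle : (X ∩ ((M : Set E) \ N) ∪ X ∩ ((M' : Set E) \ N')).ncard ≤ X.ncard :=
      Set.ncard_le_ncard (Set.union_subset Set.inter_subset_left Set.inter_subset_left)
    omega
  obtain hq | hq := (Nat.card K).eq_zero_or_pos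
  · simp [hq] at hX
  · nlinarith

lemma ncard_mul_le_ncard_mul {α β : Type*} [Finite α] [Finite β] {s : Set α} {t : Set β}
    {m n : ℕ} (r : α → β → Prop) (hm : ∀ a ∈ s, m ≤ {b ∈ t | r a b}.ncard)
    (hn : ∀ b ∈ t, {a ∈ s | r a b}.ncard ≤ n) : s.ncard * m ≤ t.ncard * n := by
  classical
  lift s to Finset α using Set.toFinite s
  lift t to Finset β using Set.toFinite t
  simp only [Finset.mem_coe, ← Finset.coe_filter, Set.ncard_coe_finset] at hm hn ⊢
  exact Finset.card_mul_le_card_mul r hm hn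

lemma mem_span_singleton_sup_exchange {e x : E} (heY : e ∉ Y) (he : e ∈ K ∙ x ⊔ Y) :
    x ∈ K ∙ e ⊔ Y := by
  have hle : K ∙ e ⊔ Y ≤ K ∙ x ⊔ Y := sup_le ((span_singleton_le_iff_mem _ _).mpr he) le_sup_right
  have hlt : Y < K ∙ e ⊔ Y := (covBy_span_singleton_sup heY).lt
  have heq := ((wcovBy_span_singleton_sup x Y).eq_or_eq hlt.le hle).resolve_left hlt.ne'
  exact heq ▸ mem_sup_left (mem_span_singleton_self x)

lemma mul_le_mul_ncard_of_forall_covBy [Finite E] (hYN : Y ⋖ N) (hNM : N ⋖ M)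
    (hX : ∀ N', Y ⋖ N' → N' ≤ M → (Nat.card K - 1) * Nat.card Y ≤ (X ∩ (M \ N')).ncard) :
    (Nat.card K + 1) * ((Nat.card K - 1) * Nat.card Y) ≤ Nat.card K * X.ncard := by
  have hYM : Y ≤ M := hYN.le.trans hNM.le
  have hMY : (M : Set E).ncard = Nat.card K * (Nat.card K * Nat.card Y) :=
    (natCard_eq_mul_of_covBy hNM).trans (by rw [natCard_eq_mul_of_covBy hYN])
  have hcard : ((M : Set E) \ Y).ncard = (Nat.card K + 1) * ((Nat.card K - 1) * Nat.card Y) := by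
    have hY : (Y : Set E).ncard = Nat.card Y := rfl
    rw [Set.ncard_sdiff hYM, hMY, hY, ← mul_assoc, ← mul_assoc, ← Nat.mul_self_sub_mul_self_eq,
      Nat.sub_mul, one_mul, one_mul]
  have hcount : ((M : Set E) \ Y).ncard * ((Nat.card K - 1) * Nat.card Y) ≤
      (X ∩ M).ncard * ((Nat.card K - 1) * (Nat.card K * Nat.card Y)) := by
    apply ncard_mul_le_ncard_mul fun e x ↦ x ∉ K ∙ e ⊔ Y
    · rintro e ⟨heM, heY⟩
      have hle : K ∙ e ⊔ Y ≤ M := sup_le ((span_singleton_le_iff_mem _ _).mpr heM) hYM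
      exact (hX _ (covBy_span_singleton_sup heY) hle).trans_eq
        (congrArg Set.ncard (Set.inter_sdiff_assoc _ _ _).symm)
    · rintro x ⟨-, hxM⟩
      by_cases hxY : x ∈ Y
      · simp [mem_sup_right hxY]
      have hle : K ∙ x ⊔ Y ≤ M := sup_le ((span_singleton_le_iff_mem _ _).mpr hxM) hYM
      have hcardx : ((K ∙ x ⊔ Y : Submodule K E) : Set E).ncard = Nat.card K * Nat.card Y :=
        natCard_eq_mul_of_covBy (covBy_span_singleton_sup hxY)
      rw [Nat.sub_one_mul, ← hMY, ← hcardx, ← Set.ncard_sdiff hle]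
      refine Set.ncard_le_ncard ?_
      rintro e ⟨⟨heM, heY⟩, hxe⟩
      exact ⟨heM, fun he ↦ hxe (mem_span_singleton_sup_exchange heY he)⟩
  obtain h0 | hpos := ((Nat.card K - 1) * Nat.card Y).eq_zero_or_pos
  · simp [h0]
  · have hle : (X ∩ M).ncard ≤ X.ncard := Set.ncard_le_ncard Set.inter_subset_left
    rw [hcard] at hcount
    refine Nat.le_of_mul_le_mul_right (hcount.trans ?_) hpos
    nlinarith [Nat.mul_le_mul_right (Nat.card K * ((Nat.card K - 1) * Nat.card Y)) hle]

theorem BlocksComplements.exists_covBy_or_le_mul_ncard [Finite E] (hX : BlocksComplements Y X) :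
    (∃ Z, Y ⋖ Z ∧ (Z : Set E) \ Y ⊆ X) ∨
      (Nat.card K + 1) * ((Nat.card K - 1) * Nat.card Y) ≤ Nat.card K * X.ncard := by
  induction hd : finrank K E using Nat.strong_induction_on generalizing E with
  | _ d ih =>
  subst hd
  by_contra! ⟨hfull, hlt⟩
  have hlines : ∀ N, Y ⋖ N → ∃ M, N ⋖ M ∧
      (Nat.card K - 1) * Nat.card Y ≤ (X ∩ (M \ N)).ncard := by
    intro N hYN
    obtain ⟨e, ⟨heN, heY⟩, heX⟩ := Set.not_subset.mp (hfull N hYN)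
    have hN : K ∙ e ⊔ Y = N :=
      (hYN.eq_or_eq le_sup_right (sup_le ((span_singleton_le_iff_mem _ _).mpr heN)
        hYN.le)).resolve_left (covBy_span_singleton_sup heY).ne'
    have : Finite (E ⧸ K ∙ e) := Finite.of_surjective _ (mkQ_surjective _)
    have hdim : finrank K (E ⧸ K ∙ e) < finrank K E := by
      have he : e ≠ 0 := by rintro rfl; exact heY Y.zero_mem
      have := (K ∙ e).finrank_quotient_add_finrank
      have := finrank_span_singleton (K := K) he
      omega
    obtain ⟨Z, hZ, hZX⟩ | hle := ih _ hdim (hX.image_mkQ heY heX) rfl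
    · exact hN ▸ exists_covBy_le_ncard_of_sdiff_subset_image_mkQ heY hZ hZX
    · rw [natCard_map_mkQ_span_singleton heY] at hle
      have : ((K ∙ e).mkQ '' X).ncard ≤ X.ncard := Set.ncard_image_le
      exact absurd (hle.trans (Nat.mul_le_mul_left _ this)) hlt.not_ge
  obtain ⟨N, hYN⟩ : ∃ N, Y ⋖ N := by
    apply exists_covBy_of_wellFoundedLT
    rw [isMax_iff_eq_top]
    rintro rfl
    obtain ⟨x, hxX, hx⟩ := hX.exists_mem ⊥ isCompl_top_bot
    exact hX.zero_notMem ((mem_bot K).mp hx ▸ hxX)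
  obtain ⟨M, hNM, hM⟩ := hlines N hYN
  exact hlt.not_ge <| mul_le_mul_ncard_of_forall_covBy hYN hNM fun N' hYN' hN'M ↦
    le_ncard_inter_sdiff_of_covBy hlines hlt hYN hNM hM hYN' hN'M

end Blocking

section Hyperplanes

variable {K V : Type*} [Field K] [AddCommGroup V] [Module K V]

lemma exists_smul_eq_of_ker_le_ker {f g : Dual K V} (h : LinearMap.ker f ≤ LinearMap.ker g) :
    ∃ c : K, c • f = g := by
  have := mem_span_of_iInf_ker_le_ker (ι := Unit) (L := fun _ ↦ f) (K := g) (by simpa using h)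
  rwa [Set.range_const, mem_span_singleton] at this

lemma exists_ker_eq_of_finrank_add_one_eq [FiniteDimensional K V] {H : Submodule K V}
    (hH : finrank K H + 1 = finrank K V) : ∃ f : Dual K V, LinearMap.ker f = H := by
  have hlt : H < ⊤ := lt_top_of_finrank_lt_finrank (by omega)
  obtain ⟨f, hf0, hHf⟩ := H.exists_le_ker_of_lt_top hlt
  have := Dual.finrank_ker_add_one_of_ne_zero hf0
  exact ⟨f, (eq_of_le_of_finrank_eq hHf (by omega)).symm⟩

lemma ncard_le_mul_ncard_image_ker [Finite K] [FiniteDimensional K V] {T : Set (Dual K V)}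
    (hT : 0 ∉ T) : T.ncard ≤ (Nat.card K - 1) * (LinearMap.ker '' T).ncard := by
  classical
  have : Finite (Dual K V) := Module.finite_of_finite K
  have hfiber (f : Dual K V) :
      {g ∈ T | LinearMap.ker g = LinearMap.ker f}.ncard ≤ Nat.card K - 1 := by
    have hsub : {g ∈ T | LinearMap.ker g = LinearMap.ker f} ⊆ Set.range fun c : Kˣ ↦ c • f := by
      rintro g ⟨hg, hgf⟩
      obtain ⟨c, rfl⟩ := exists_smul_eq_of_ker_le_ker hgf.ge
      have hc : c ≠ 0 := by rintro rfl; exact hT (zero_smul K f ▸ hg)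
      exact ⟨Units.mk0 c hc, rfl⟩
    have hrange := Finite.card_range_le fun c : Kˣ ↦ c • f
    rw [Nat.card_units] at hrange
    exact (Set.ncard_le_ncard hsub).trans hrange
  lift T to Finset (Dual K V) using Set.toFinite T
  rw [← Finset.coe_image, Set.ncard_coe_finset, Set.ncard_coe_finset]
  refine Finset.card_le_mul_card_image T _ fun H hH ↦ ?_
  obtain ⟨f, -, rfl⟩ := Finset.mem_image.mp hH
  simpa only [Finset.mem_coe, ← Finset.coe_filter, Set.ncard_coe_finset] using hfiber f

lemma exists_finrank_add_one_of_dualAnnihilator_covBy [FiniteDimensional K V] {S : Submodule K V}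
    {Z : Submodule K (Dual K V)} {B : Set (Submodule K V)} (hZ : S.dualAnnihilator ⋖ Z)
    (hZB : ∀ f ∈ Z, f ∉ S.dualAnnihilator → LinearMap.ker f ∈ B) :
    ∃ ρ ≤ S, finrank K ρ + 1 = finrank K S ∧
      ∀ H : Submodule K V, finrank K H + 1 = finrank K V → H ⊓ S = ρ → H ∈ B := by
  have hS := Subspace.finrank_add_finrank_dualAnnihilator_eq S
  have hρ := Subspace.finrank_add_finrank_dualCoannihilator_eq Z
  have hZS := finrank_eq_add_one_of_covBy hZ
  refine ⟨Z.dualCoannihilator, ?_, by omega, fun H hH hHS ↦ ?_⟩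
  · rw [← Subspace.dualAnnihilator_dualCoannihilator_eq (W := S)]
    exact dualCoannihilator_anti hZ.le
  obtain ⟨f, rfl⟩ := exists_ker_eq_of_finrank_add_one_eq hH
  refine hZB f ?_ fun hfS ↦ ?_
  · rw [← Subspace.dualCoannihilator_dualAnnihilator_eq (W := Z), mem_dualAnnihilator, ← hHS]
    exact fun x hx ↦ hx.1
  · have hSker : S ≤ LinearMap.ker f := (mem_dualAnnihilator f).mp hfS
    rw [inf_eq_right.mpr hSker] at hHS
    rw [← hHS] at hρ
    omega

variable {P S : Submodule K V} {B : Set (Submodule K V)}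

lemma blocksComplements_setOf_ker_mem [FiniteDimensional K V] (hPS : P ≤ S)
    (hB : ∀ H ∈ B, finrank K H + 1 = finrank K V)
    (hcov : ∀ U, U ⊓ S = P → U ⊔ S = ⊤ → ∃ H ∈ B, U ≤ H) :
    BlocksComplements (S.dualAnnihilator.submoduleOf P.dualAnnihilator)
      {f : P.dualAnnihilator | LinearMap.ker f.1 ∈ B} where
  zero_notMem h := by
    have htop := hB _ h
    rw [ZeroMemClass.coe_zero, LinearMap.ker_zero, finrank_top] at htop
    omega
  smul_mem {c f} hc hf := by simpa [LinearMap.ker_smul _ _ hc] using hf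
  exists_mem U hU := by
    have hSP : S.dualAnnihilator ≤ P.dualAnnihilator := dualAnnihilator_anti hPS
    set G := U.map P.dualAnnihilator.subtype with hG
    have hYS : (S.dualAnnihilator.submoduleOf P.dualAnnihilator).map P.dualAnnihilator.subtype =
        S.dualAnnihilator := (map_comap_subtype _ _).trans (inf_eq_right.mpr hSP)
    have hsup : G ⊔ S.dualAnnihilator = P.dualAnnihilator := by
      rw [← hYS, hG, ← Submodule.map_sup, hU.symm.sup_eq_top, map_subtype_top]
    have hinf : G ⊓ S.dualAnnihilator = ⊥ := by
      rw [← hYS, hG, ← Submodule.map_inf _ (subtype_injective _), hU.symm.inf_eq_bot,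
        Submodule.map_bot]
    have hGW : G.dualCoannihilator.dualAnnihilator = G :=
      Subspace.dualCoannihilator_dualAnnihilator_eq
    obtain ⟨H, hHB, hGH⟩ := hcov G.dualCoannihilator
      (by rw [← Subspace.dualAnnihilator_inj, Subspace.dualAnnihilator_inf_eq, hGW, hsup])
      (by rw [← Subspace.dualAnnihilator_inj, dualAnnihilator_sup_eq, hGW, hinf,
        dualAnnihilator_top])
    obtain ⟨f, rfl⟩ := exists_ker_eq_of_finrank_add_one_eq (hB H hHB)
    have hfG : f ∈ G := by
      rw [← hGW, mem_dualAnnihilator]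
      exact hGH
    obtain ⟨g, hgU, rfl⟩ := hfG
    exact ⟨g, hHB, hgU⟩

lemma ncard_setOf_ker_mem_le [Finite K] [FiniteDimensional K V] (hB : ⊤ ∉ B)
    (Q : Submodule K (Dual K V)) :
    {f : Q | LinearMap.ker f.1 ∈ B}.ncard ≤ (Nat.card K - 1) * B.ncard := by
  have : Finite V := Module.finite_of_finite K
  set T : Set (Dual K V) := Subtype.val '' {f : Q | LinearMap.ker f.1 ∈ B}
  have hTB : LinearMap.ker '' T ⊆ B := by
    rintro _ ⟨_, ⟨f, hf, rfl⟩, rfl⟩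
    exact hf
  have h0 : 0 ∉ T := fun h ↦ hB (hTB ⟨0, h, LinearMap.ker_zero⟩)
  calc {f : Q | LinearMap.ker f.1 ∈ B}.ncard = T.ncard :=
        (Set.ncard_image_of_injective _ Subtype.val_injective).symm
    _ ≤ (Nat.card K - 1) * (LinearMap.ker '' T).ncard := ncard_le_mul_ncard_image_ker h0
    _ ≤ (Nat.card K - 1) * B.ncard := Nat.mul_le_mul_left _ (Set.ncard_le_ncard hTB)

theorem exists_finrank_add_one_or_mul_pow_le_mul_ncard [Finite K] [FiniteDimensional K V] {k : ℕ}
    (hS : finrank K S + k = finrank K V) (hPS : P ≤ S)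
    (hB : ∀ H ∈ B, finrank K H + 1 = finrank K V)
    (hcov : ∀ U, U ⊓ S = P → U ⊔ S = ⊤ → ∃ H ∈ B, U ≤ H) :
    (∃ ρ ≤ S, finrank K ρ + 1 = finrank K S ∧
      (∀ H : Submodule K V, finrank K H + 1 = finrank K V → H ⊓ S = ρ → H ∈ B) ∧
      Nat.card K ^ k ≤ B.ncard) ∨
    (Nat.card K + 1) * Nat.card K ^ k ≤ Nat.card K * B.ncard := by
  have : Finite (Dual K V) := Module.finite_of_finite K
  have hSP : S.dualAnnihilator ≤ P.dualAnnihilator := dualAnnihilator_anti hPS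
  have hcard : Nat.card (S.dualAnnihilator.submoduleOf P.dualAnnihilator) = Nat.card K ^ k := by
    have := Subspace.finrank_add_finrank_dualAnnihilator_eq S
    rw [Nat.card_congr (submoduleOfEquivOfLe hSP).toEquiv, natCard_eq_pow_finrank (K := K)]
    congr 1
    omega
  have hq : 0 < Nat.card K - 1 := Nat.sub_pos_of_lt Finite.one_lt_card
  have htop : ⊤ ∉ B := fun h ↦ by simpa using hB ⊤ h
  have hXB := ncard_setOf_ker_mem_le htop P.dualAnnihilator
  obtain ⟨Z, hZ, hZX⟩ | hle :=
    (blocksComplements_setOf_ker_mem hPS hB hcov).exists_covBy_or_le_mul_ncard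
  · left
    have hZmap : S.dualAnnihilator ⋖ Z.map P.dualAnnihilator.subtype := by
      have := map_covBy_of_injective P.dualAnnihilator.subtype_injective hZ
      rwa [submoduleOf, map_comap_subtype, inf_eq_right.mpr hSP] at this
    obtain ⟨ρ, hρS, hρ, hρB⟩ := exists_finrank_add_one_of_dualAnnihilator_covBy (B := B) hZmap
      (by rintro _ ⟨f, hfZ, rfl⟩ hfS; exact hZX ⟨hfZ, hfS⟩)
    refine ⟨ρ, hρS, hρ, hρB, Nat.le_of_mul_le_mul_left ?_ hq⟩
    rw [← hcard, ← ncard_sdiff_of_covBy (E := P.dualAnnihilator) hZ]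
    exact (Set.ncard_le_ncard hZX).trans hXB
  · right
    refine Nat.le_of_mul_le_mul_left ?_ hq
    rw [hcard] at hle
    nlinarith

end Hyperplanes

theorem stmt_14_general {F V : Type*} [Field F] [Fintype F] [AddCommGroup V] [Module F V]
    [FiniteDimensional F V] (k : ℕ) (hk : 1 ≤ k) (B0 Bn : Set (Submodule F V))
    (hB0 : ∀ p ∈ B0, finrank F p = 1) (hBn : ∀ H ∈ Bn, finrank F H + 1 = finrank F V)
    (hblock : ∀ W : Submodule F V, finrank F W = k + 1 →
      (∃ p ∈ B0, p ≤ W) ∨ (∃ H ∈ Bn, W ≤ H))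
    (SIG : Submodule F V) (hSIG : finrank F SIG + k = finrank F V) (hB0SIG : ∀ p ∈ B0, p ≤ SIG)
    (P : Submodule F V) (hP : finrank F P = 1) (hPS : P ≤ SIG) (hPB : P ∉ B0) :
    (∃ ρ ≤ SIG, finrank F ρ + 1 = finrank F SIG ∧
      (∀ H : Submodule F V, finrank F H + 1 = finrank F V → H ⊓ SIG = ρ →
        H ∈ {H ∈ Bn | P ≤ H ∧ ¬ SIG ≤ H}) ∧
      Fintype.card F ^ k ≤ {H ∈ Bn | P ≤ H ∧ ¬ SIG ≤ H}.ncard) ∨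
    Fintype.card F ^ (k - 1) * (Fintype.card F + 1) ≤ {H ∈ Bn | P ≤ H ∧ ¬ SIG ≤ H}.ncard := by
  have hcov : ∀ U, U ⊓ SIG = P → U ⊔ SIG = ⊤ → ∃ H ∈ {H ∈ Bn | P ≤ H ∧ ¬ SIG ≤ H}, U ≤ H := by
    intro U hinf hsup
    have hU : finrank F U = k + 1 := by
      have := finrank_sup_add_finrank_inf_eq U SIG
      rw [hinf, hsup, finrank_top] at this
      omega
    obtain ⟨p, hp, hpU⟩ | ⟨H, hH, hUH⟩ := hblock U hU
    · have hpP : p ≤ P := hinf ▸ le_inf hpU (hB0SIG p hp)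
      exact absurd (eq_of_le_of_finrank_eq hpP ((hB0 p hp).trans hP.symm) ▸ hp) hPB
    · refine ⟨H, ⟨hH, hinf ▸ inf_le_left.trans hUH, fun hSH ↦ ?_⟩, hUH⟩
      have htop : H = ⊤ := top_le_iff.mp (hsup ▸ sup_le hUH hSH)
      have := hBn H hH
      rw [htop, finrank_top] at this
      omega
  rw [← Nat.card_eq_fintype_card]
  refine (exists_finrank_add_one_or_mul_pow_le_mul_ncard hSIG hPS
    (fun H hH ↦ hBn H hH.1) hcov).imp_right fun hle ↦ ?_
  refine Nat.le_of_mul_le_mul_left (le_of_eq_of_le ?_ hle) (Nat.card_pos (α := F))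
  rw [← mul_assoc, mul_pow_sub_one (by omega), mul_comm]

/-- Let `B = B0 ∪ Bn` be a blocking set of points and hyperplanes
with respect to `k`-spaces in `PG(2k+1,q)`, suppose `B0` is contained in a
`(k+1)`-space `SIG`, and let `P` be a point of `SIG` not in `B0`.  Let
`BP = {H ∈ Bn | P ≤ H ∧ ¬ SIG ≤ H}`.  Then either there is a `k`-space `ρ ⊆ SIG`
such that `BP` contains every hyperplane meeting `SIG` exactly in `ρ`, in which case
`|BP| ≥ q^k`, or `|BP| ≥ q^(k-1)·(q+1)`. -/
theorem stmt_14 {F : Type} [Field F] [Fintype F] (k : ℕ) (hk : 1 ≤ k)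
    (B0 Bn : Set (Submodule F (Fin (2 * k + 2) → F)))
    (hB0 : ∀ p ∈ B0, Module.finrank F p = 1)
    (hBn : ∀ H ∈ Bn, Module.finrank F H = 2 * k + 1)
    (hblock : ∀ W : Submodule F (Fin (2 * k + 2) → F), Module.finrank F W = k + 1 →
      (∃ p ∈ B0, p ≤ W) ∨ (∃ H ∈ Bn, W ≤ H))
    (SIG : Submodule F (Fin (2 * k + 2) → F)) (hSIG : Module.finrank F SIG = k + 2)
    (hB0SIG : ∀ p ∈ B0, p ≤ SIG)
    (P : Submodule F (Fin (2 * k + 2) → F)) (hP : Module.finrank F P = 1) (hPS : P ≤ SIG) (hPB : P ∉ B0) :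
    (∃ ρ : Submodule F (Fin (2 * k + 2) → F), Module.finrank F ρ = k + 1 ∧ ρ ≤ SIG ∧
      (∀ H : Submodule F (Fin (2 * k + 2) → F), Module.finrank F H = 2 * k + 1 → H ⊓ SIG = ρ →
        H ∈ {H ∈ Bn | P ≤ H ∧ ¬ SIG ≤ H}) ∧
      (Fintype.card F) ^ k ≤ {H ∈ Bn | P ≤ H ∧ ¬ SIG ≤ H}.ncard) ∨
    (Fintype.card F) ^ (k - 1) * (Fintype.card F + 1) ≤ {H ∈ Bn | P ≤ H ∧ ¬ SIG ≤ H}.ncard := by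
  have hV : finrank F (Fin (2 * k + 2) → F) = 2 * k + 2 := by simp
  obtain ⟨ρ, hρS, hρ, hρB, hle⟩ | hle := stmt_14_general k hk B0 Bn hB0
    (fun H hH ↦ by rw [hV, hBn H hH]) hblock SIG (by omega) hB0SIG P hP hPS hPB
  · exact Or.inl ⟨ρ, by omega, hρS, fun H hH ↦ hρB H (by omega), hle⟩
  · exact Or.inr hle
end

section
/- Let n be an even integer with n ≥ 2, and work in PG(n,2). Let Σ be an (n/2)-space and κ ⊂ Σ an (n/2 - 1)-space. Let B_0 be the set of points of Σ not in κ, and let B_{n-1} be the set of hyperplanes containing κ but not containing Σ. Then every (n/2)-space of PG(n,2) contains a point of B_0 or is contained in a hyperplane of B_{n-1}, and |B_0| + |B_{n-1}| = 2^{n/2+1}. -/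
/-!
If a subspace `W` meets `B` only inside `A < B`, then modularity gives `B ≰ A ⊔ W`, so some linear
form vanishes on `A ⊔ W` but not on `B`: its kernel is the required hyperplane.  Otherwise `W`
contains a vector of `B \ A`, which spans the required point.

Annihilators exchange the hyperplanes through `A` not containing `B` with the points of
`A.dualAnnihilator` outside `B.dualAnnihilator`, so both families are counted by the same formula.
-/

open Module

section Lattice

variable {α : Type*}

/-- The atoms below `b` that are not below `a`.  In the lattice of subspaces these are the points
of the projective space lying on `b` but not on `a`. -/
def atomDiff [PartialOrder α] [OrderBot α] (b a : α) : Set α :=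
  {p | IsAtom p ∧ p ≤ b ∧ ¬ p ≤ a}

/-- The coatoms above `a` that are not above `b`.  In the lattice of subspaces these are the
hyperplanes containing `a` but not `b`. -/
def coatomDiff [PartialOrder α] [OrderTop α] (a b : α) : Set α :=
  {H | IsCoatom H ∧ a ≤ H ∧ ¬ b ≤ H}

theorem exists_mem_atomDiff_le_iff [SemilatticeInf α] [OrderBot α] [IsAtomistic α] {a b w : α} :
    (∃ p ∈ atomDiff b a, p ≤ w) ↔ ¬ w ⊓ b ≤ a := by
  simp only [le_iff_atom_le_imp (a := w ⊓ b), le_inf_iff, atomDiff, Set.mem_ofPred_eq]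
  grind

theorem exists_mem_coatomDiff_ge_iff [SemilatticeSup α] [OrderTop α] [IsCoatomistic α]
    {a b w : α} : (∃ H ∈ coatomDiff a b, w ≤ H) ↔ ¬ b ≤ a ⊔ w := by
  rw [sup_comm]
  exact exists_mem_atomDiff_le_iff (α := αᵒᵈ) (a := .toDual b) (b := .toDual a) (w := .toDual w)

theorem not_le_sup_of_inf_le_of_lt [Lattice α] [IsModularLattice α] {a b w : α} (hab : a < b)
    (hw : w ⊓ b ≤ a) : ¬ b ≤ a ⊔ w := by
  intro hb
  refine hab.not_ge ?_
  calc
    b = (a ⊔ w) ⊓ b := (inf_eq_right.mpr hb).symm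
    _ = a ⊔ w ⊓ b := sup_inf_assoc_of_le w hab.le
    _ ≤ a := sup_le le_rfl hw

theorem exists_mem_atomDiff_le_or_exists_mem_coatomDiff_ge [Lattice α] [BoundedOrder α]
    [IsModularLattice α] [IsAtomistic α] [IsCoatomistic α] {a b : α} (hab : a < b) (w : α) :
    (∃ p ∈ atomDiff b a, p ≤ w) ∨ ∃ H ∈ coatomDiff a b, w ≤ H := by
  rw [exists_mem_atomDiff_le_iff, exists_mem_coatomDiff_ge_iff, or_iff_not_imp_left, not_not]
  exact not_le_sup_of_inf_le_of_lt hab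

end Lattice

section DivisionRing

variable {K V : Type*} [DivisionRing K] [AddCommGroup V] [Module K V]

theorem isCoatom_iff_finrank_add_one_eq [FiniteDimensional K V] {H : Submodule K V} :
    IsCoatom H ↔ finrank K H + 1 = finrank K V := by
  rw [← isSimpleModule_iff_isCoatom, isSimpleModule_iff_finrank_eq_one,
    ← H.finrank_quotient_add_finrank]
  omega

theorem ncard_isAtom : {p : Submodule K V | IsAtom p}.ncard = Nat.card (Projectivization K V) := by
  simp only [Submodule.isAtom_iff_finrank_eq_one]
  exact (Nat.card_congr (Projectivization.equivSubmodule K V)).symm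

theorem image_map_subtype_isAtom (B : Submodule K V) :
    Submodule.map B.subtype '' {p | IsAtom p} = {p | IsAtom p ∧ p ≤ B} := by
  ext p
  simp only [Submodule.isAtom_iff_finrank_eq_one, Set.mem_image, Set.mem_ofPred_eq]
  constructor
  · rintro ⟨p, hp, rfl⟩
    exact ⟨(Submodule.finrank_map_subtype_eq B p).trans hp, Submodule.map_subtype_le B p⟩
  · rintro ⟨hp, hpB⟩
    have hmap : (p.comap B.subtype).map B.subtype = p := by
      rw [Submodule.map_comap_subtype, inf_eq_right.mpr hpB]
    exact ⟨p.comap B.subtype, by rw [← Submodule.finrank_map_subtype_eq, hmap, hp], hmap⟩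

theorem ncard_isAtom_le_mul_add_one [Finite K] (B : Submodule K V) [FiniteDimensional K B] :
    {p | IsAtom p ∧ p ≤ B}.ncard * (Nat.card K - 1) + 1 = Nat.card K ^ finrank K B := by
  have : Finite B := Module.finite_of_finite K
  rw [← image_map_subtype_isAtom,
    Set.ncard_image_of_injective _ (Submodule.map_injective_of_injective B.injective_subtype),
    ncard_isAtom, ← Projectivization.card', Module.natCard_eq_pow_finrank (K := K)]

theorem ncard_atomDiff_mul_add [Finite K] {A B : Submodule K V} [FiniteDimensional K B]
    (hAB : A ≤ B) :
    (atomDiff B A).ncard * (Nat.card K - 1) + Nat.card K ^ finrank K A =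
      Nat.card K ^ finrank K B := by
  have : FiniteDimensional K A := Submodule.finiteDimensional_of_le hAB
  have : Finite B := Module.finite_of_finite K
  have hfin : {p | IsAtom p ∧ p ≤ B}.Finite := image_map_subtype_isAtom B ▸ Set.toFinite _
  have hsub : {p | IsAtom p ∧ p ≤ A} ⊆ {p | IsAtom p ∧ p ≤ B} :=
    fun p hp => ⟨hp.1, hp.2.trans hAB⟩
  have hdiff : atomDiff B A = {p | IsAtom p ∧ p ≤ B} \ {p | IsAtom p ∧ p ≤ A} := by
    ext p
    simp only [atomDiff, Set.mem_sdiff, Set.mem_ofPred_eq]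
    tauto
  rw [← ncard_isAtom_le_mul_add_one A, ← ncard_isAtom_le_mul_add_one B, ← add_assoc, ← add_mul,
    hdiff, Set.ncard_sdiff_add_ncard_of_subset hsub hfin]

end DivisionRing

section Field

variable {K V : Type*} [Field K] [AddCommGroup V] [Module K V]

instance isCoatomistic_subspace : IsCoatomistic (Submodule K V) where
  isGLB_coatoms A := by
    refine ⟨{H | IsCoatom H ∧ A ≤ H}, ⟨fun H hH => hH.2, fun B hB => ?_⟩, fun H hH => hH.1⟩
    by_contra hBA
    obtain ⟨x, hxB, hxA⟩ := SetLike.not_le_iff_exists.mp hBA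
    obtain ⟨f, hfx, hfA⟩ := Submodule.exists_le_ker_of_notMem hxA
    have hf : f ≠ 0 := fun hf => hfx (by rw [hf, LinearMap.zero_apply])
    have hker : IsCoatom (LinearMap.ker f) :=
      LinearMap.isCoatom_ker_of_surjective (LinearMap.surjective hf)
    exact hfx (hB ⟨hker, hfA⟩ hxB)

variable [FiniteDimensional K V]

theorem preimage_dualAnnihilator_atomDiff (A B : Submodule K V) :
    Submodule.dualAnnihilator ⁻¹' atomDiff A.dualAnnihilator B.dualAnnihilator =
      coatomDiff A B := by
  ext H
  have hH : IsAtom H.dualAnnihilator ↔ IsCoatom H :=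
    isCoatom_dual_iff_isAtom.symm.trans (Subspace.orderIsoFiniteDimensional.isCoatom_iff H)
  simp only [Set.mem_preimage, atomDiff, coatomDiff, Set.mem_ofPred_eq, hH,
    Subspace.dualAnnihilator_le_dualAnnihilator_iff]

theorem ncard_coatomDiff_eq_ncard_atomDiff_dualAnnihilator (A B : Submodule K V) :
    (coatomDiff A B).ncard = (atomDiff A.dualAnnihilator B.dualAnnihilator).ncard := by
  have hbij := (Subspace.orderIsoFiniteDimensional (K := K) (V := V)).bijective
  rw [← preimage_dualAnnihilator_atomDiff]
  exact Set.ncard_preimage_of_injective_subset_range hbij.injective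
    fun p _ => hbij.surjective p

variable [Finite K] {A B : Submodule K V}

theorem ncard_coatomDiff_mul_add (hAB : A ≤ B) :
    (coatomDiff A B).ncard * (Nat.card K - 1) + Nat.card K ^ finrank K (V ⧸ B) =
      Nat.card K ^ finrank K (V ⧸ A) := by
  rw [ncard_coatomDiff_eq_ncard_atomDiff_dualAnnihilator,
    (Subspace.quotEquivAnnihilator A).finrank_eq, (Subspace.quotEquivAnnihilator B).finrank_eq]
  exact ncard_atomDiff_mul_add (Submodule.dualAnnihilator_anti hAB)

theorem stmt_15_general (hAB : A < B) {B₀ Bₙ : Set (Submodule K V)}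
    (hB₀ : B₀ = {p : Submodule K V | finrank K p = 1 ∧ p ≤ B ∧ ¬ p ≤ A})
    (hBₙ : Bₙ = {H : Submodule K V | finrank K H + 1 = finrank K V ∧ A ≤ H ∧ ¬ B ≤ H}) :
    (∀ W : Submodule K V, (∃ p ∈ B₀, p ≤ W) ∨ ∃ H ∈ Bₙ, W ≤ H) ∧
    (B₀.ncard + Bₙ.ncard) * (Nat.card K - 1) +
        (Nat.card K ^ finrank K A + Nat.card K ^ (finrank K V - finrank K B)) =
      Nat.card K ^ finrank K B + Nat.card K ^ (finrank K V - finrank K A) := by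
  have hpoints : B₀ = atomDiff B A := by
    simp only [hB₀, atomDiff, Submodule.isAtom_iff_finrank_eq_one]
  have hhyperplanes : Bₙ = coatomDiff A B := by
    simp only [hBₙ, coatomDiff, isCoatom_iff_finrank_add_one_eq]
  rw [hpoints, hhyperplanes, ← Submodule.finrank_quotient, ← Submodule.finrank_quotient,
    ← ncard_atomDiff_mul_add hAB.le, ← ncard_coatomDiff_mul_add hAB.le]
  exact ⟨exists_mem_atomDiff_le_or_exists_mem_coatomDiff_ge hAB, by ring⟩

end Field

/-- Let `n = 2m` be even with `n ≥ 2` and work in `PG(n,2)`.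
Let `SIG` be an `(n/2)`-space and `kap ⊂ SIG` an `(n/2 - 1)`-space.  Let `B0` be the
set of points of `SIG` not in `kap`, and `Bn` the set of hyperplanes through `kap`
not containing `SIG`.  Then `B0 ∪ Bn` blocks every `(n/2)`-space of `PG(n,2)` and
`|B0| + |Bn| = 2^(n/2+1)`. -/
theorem stmt_15 (m : ℕ) (hm : 1 ≤ m)
    (SIG kap : Submodule (ZMod 2) (Fin (2 * m + 1) → ZMod 2))
    (hSIG : Module.finrank (ZMod 2) SIG = m + 1)
    (hkap : Module.finrank (ZMod 2) kap = m)
    (hsub : kap < SIG)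
    (B0 Bn : Set (Submodule (ZMod 2) (Fin (2 * m + 1) → ZMod 2)))
    (hB0 : B0 = {p : Submodule (ZMod 2) (Fin (2 * m + 1) → ZMod 2) | Module.finrank (ZMod 2) p = 1 ∧ p ≤ SIG ∧ ¬ p ≤ kap})
    (hBn : Bn = {H : Submodule (ZMod 2) (Fin (2 * m + 1) → ZMod 2) | Module.finrank (ZMod 2) H = 2 * m ∧ kap ≤ H ∧ ¬ SIG ≤ H}) :
    (∀ W : Submodule (ZMod 2) (Fin (2 * m + 1) → ZMod 2), Module.finrank (ZMod 2) W = m + 1 →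
      (∃ p ∈ B0, p ≤ W) ∨ (∃ H ∈ Bn, W ≤ H)) ∧
    B0.ncard + Bn.ncard = 2 ^ (m + 1) := by
  have ⟨hblock, hcard⟩ := stmt_15_general (Bₙ := Bn) hsub hB0 (by simpa using hBn)
  rw [finrank_fin_fun, hSIG, hkap, Nat.card_zmod, show 2 * m + 1 - (m + 1) = m by omega,
    show 2 * m + 1 - m = m + 1 by omega] at hcard
  exact ⟨fun W _ => hblock W, by omega⟩
end

section
/- Let k, n be integers with 0 ≤ k and k ≤ (n-3)/2. Then the Gaussian binomial coefficient C(n,k)_2 (with q = 2) satisfies C(n,k)_2 < 2^{(n-k-1)(k+1)}. -/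
/-- The Gaussian binomial coefficient `C(a,b)_q`, where `q = Fintype.card F`:
the number of `b`-dimensional linear subspaces of `F^a`; it equals
`∏ i in [1..b], (q^(a-b+i)-1)/(q^i-1)`, and is `0` unless `0 ≤ b ≤ a`. -/
noncomputable def gauss (F : Type) [Field F] [Fintype F] (a b : ℕ) : ℕ :=
  Nat.card {W : Submodule F (Fin a → F) // Module.finrank F W = b}

/-!
Every `k`-dimensional subspace of `F^n` has exactly `∏_{i<k} (q^k - q^i)` ordered bases, and there
are at most `q^(nk)` linearly independent `k`-tuples in `F^n`. Since
`∏_{i<k} (q^k - q^i) = q^(k²) ∏_{j=1}^k (1 - q^{-j})` and, as in Euler's pentagonal number theorem,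
`∏_{j=1}^k (1 - x^j) > 1 - x - x² ≥ 1/4` for `0 < x ≤ 1/2`, there are fewer than
`4 q^(k(n-k)) ≤ q^(k(n-k)+2)` subspaces; finally `k(n-k) + 2 ≤ (n-k-1)(k+1)` once `2k + 3 ≤ n`.
-/

open Module Finset

section ProductBound

theorem one_sub_sub_sq_add_pow_le_prod_one_sub_pow {R : Type*} [CommRing R] [LinearOrder R]
    [IsStrictOrderedRing R] {x : R} (hx₀ : 0 ≤ x) (hx₁ : x ≤ 1) (k : ℕ) :
    1 - x - x ^ 2 + x ^ (k + 2) ≤ ∏ j ∈ range (k + 1), (1 - x ^ (j + 1)) := by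
  induction k with
  | zero => simp
  | succ k ih =>
    have hpow : x ^ (k + 2) ≤ 1 := pow_le_one₀ hx₀ hx₁
    have hgap : 0 ≤ x ^ (k + 2) * (x ^ 2 - x ^ (k + 2)) :=
      mul_nonneg (pow_nonneg hx₀ _) (sub_nonneg.2 (pow_le_pow_of_le_one hx₀ hx₁ (by lia)))
    calc 1 - x - x ^ 2 + x ^ (k + 1 + 2)
        ≤ (1 - x - x ^ 2 + x ^ (k + 2)) * (1 - x ^ (k + 2)) := by linear_combination hgap
      _ ≤ (∏ j ∈ range (k + 1), (1 - x ^ (j + 1))) * (1 - x ^ (k + 2)) :=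
        mul_le_mul_of_nonneg_right ih (sub_nonneg.2 hpow)
      _ = ∏ j ∈ range (k + 1 + 1), (1 - x ^ (j + 1)) := (prod_range_succ _ _).symm

variable {K : Type*} [Field K]

theorem one_fourth_lt_prod_one_sub_pow [LinearOrder K] [IsStrictOrderedRing K] {x : K}
    (hx₀ : 0 < x) (hx : x ≤ 1 / 2) (k : ℕ) :
    1 / 4 < ∏ j ∈ range k, (1 - x ^ (j + 1)) := by
  cases k with
  | zero => norm_num
  | succ k =>
    have hquad : 1 / 4 ≤ 1 - x - x ^ 2 := by nlinarith
    have hpow : 0 < x ^ (k + 2) := pow_pos hx₀ _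
    have hprod := one_sub_sub_sq_add_pow_le_prod_one_sub_pow hx₀.le (by linarith) k
    linarith

theorem prod_pow_sub_pow_eq_pow_mul_prod_one_sub_inv_pow {q : K} (hq : q ≠ 0) (k : ℕ) :
    ∏ i ∈ range k, (q ^ k - q ^ i) = q ^ (k * k) * ∏ j ∈ range k, (1 - q⁻¹ ^ (j + 1)) := by
  have hfactor : ∀ j ∈ range k, q ^ k - q ^ (k - 1 - j) = q ^ k * (1 - q⁻¹ ^ (j + 1)) := by
    intro j hj
    have hexp : k = (k - 1 - j) + (j + 1) := by grind
    have hsplit : q ^ k * q⁻¹ ^ (j + 1) = q ^ (k - 1 - j) := by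
      nth_rw 1 [hexp]
      rw [pow_add, inv_pow, mul_inv_cancel_right₀ (pow_ne_zero _ hq)]
    rw [mul_sub, mul_one, hsplit]
  rw [← prod_range_reflect, prod_congr rfl hfactor, prod_mul_distrib, prod_const, card_range,
    ← pow_mul]

theorem pow_mul_self_lt_four_mul_prod_pow_sub_pow {q : ℕ} (hq : 2 ≤ q) (k : ℕ) :
    q ^ (k * k) < 4 * ∏ i ∈ range k, (q ^ k - q ^ i) := by
  have hq' : (2 : ℚ) ≤ q := by exact_mod_cast hq
  have hcast : ((∏ i ∈ range k, (q ^ k - q ^ i) : ℕ) : ℚ) =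
      ∏ i ∈ range k, ((q : ℚ) ^ k - (q : ℚ) ^ i) := by
    rw [Nat.cast_prod]
    refine prod_congr rfl fun i hi => ?_
    rw [Nat.cast_sub (Nat.pow_le_pow_right (by lia) (mem_range.1 hi).le), Nat.cast_pow,
      Nat.cast_pow]
  have hquarter : (1 / 4 : ℚ) < ∏ j ∈ range k, (1 - (q : ℚ)⁻¹ ^ (j + 1)) :=
    one_fourth_lt_prod_one_sub_pow (by positivity)
      (by simpa using inv_anti₀ two_pos hq') k
  rw [← Nat.cast_lt (α := ℚ), Nat.cast_mul, hcast, Nat.cast_ofNat,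
    prod_pow_sub_pow_eq_pow_mul_prod_one_sub_inv_pow (by positivity), Nat.cast_pow]
  calc (q : ℚ) ^ (k * k) = 4 * ((q : ℚ) ^ (k * k) * (1 / 4)) := by ring
    _ < 4 * ((q : ℚ) ^ (k * k) * ∏ j ∈ range k, (1 - (q : ℚ)⁻¹ ^ (j + 1))) := by gcongr

end ProductBound

section Counting

variable {K V : Type*} [DivisionRing K] [AddCommGroup V] [Module K V]

theorem span_range_coe_eq_of_card_eq_finrank {ι : Type*} [Fintype ι] {W : Submodule K V}
    [FiniteDimensional K W] {s : ι → W} (hs : LinearIndependent K s)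
    (hcard : Fintype.card ι = finrank K W) :
    Submodule.span K (Set.range fun i => (s i : V)) = W := by
  have hrange : (Set.range fun i => (s i : V)) = W.subtype '' Set.range s := Set.range_comp _ _
  rw [hrange, Submodule.span_image, hs.span_eq_top_of_card_eq_finrank' hcard,
    Submodule.map_subtype_top]

variable (K V)

/-- Ordered bases (indexed by `ι`) of the `|ι|`-dimensional subspaces of `V`, encoded as linearly
independent families in the subspace, correspond to linearly independent families in `V`: the
subspace is recovered as the span. -/
noncomputable def sigmaLinearIndependentEquiv (ι : Type*) [Fintype ι] [FiniteDimensional K V] :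
    (Σ W : {W : Submodule K V // finrank K W = Fintype.card ι},
      {s : ι → W.1 // LinearIndependent K s}) ≃ {s : ι → V // LinearIndependent K s} :=
  Equiv.ofBijective
    (fun t => ⟨fun i => t.2.1 i, t.2.2.map' t.1.1.subtype t.1.1.ker_subtype⟩) <| by
    constructor
    · rintro ⟨W, s⟩ ⟨W', s'⟩ h
      have hcoe : (fun i => (s.1 i : V)) = fun i => (s'.1 i : V) := congrArg Subtype.val h
      obtain rfl : W = W' := Subtype.ext <| by
        rw [← span_range_coe_eq_of_card_eq_finrank s.2 W.2.symm, hcoe,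
          span_range_coe_eq_of_card_eq_finrank s'.2 W'.2.symm]
      obtain rfl : s = s' := Subtype.ext <| funext fun i => Subtype.ext (congrFun hcoe i)
      rfl
    · rintro ⟨s, hs⟩
      exact ⟨⟨⟨Submodule.span K (Set.range s), finrank_span_eq_card hs⟩,
        fun i => ⟨s i, Submodule.subset_span (Set.mem_range_self i)⟩, linearIndependent_span hs⟩,
        rfl⟩

variable [Fintype K] [Finite V] {k : ℕ}

theorem natCard_submodule_finrank_eq_mul_prod (hk : k ≤ finrank K V) :
    Nat.card {W : Submodule K V // finrank K W = k} *
        ∏ i ∈ range k, (Fintype.card K ^ k - Fintype.card K ^ i) =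
      ∏ i ∈ range k, (Fintype.card K ^ finrank K V - Fintype.card K ^ i) := by
  have hbases (W : {W : Submodule K V // finrank K W = k}) :
      Nat.card {s : Fin k → W.1 // LinearIndependent K s} =
        ∏ i ∈ range k, (Fintype.card K ^ k - Fintype.card K ^ i) := by
    rw [card_linearIndependent W.2.ge, W.2, prod_range]
  have hcount := Nat.card_congr (sigmaLinearIndependentEquiv K V (Fin k))
  have := Fintype.ofFinite {W : Submodule K V // finrank K W = k}
  rw [Fintype.card_fin, Nat.card_sigma, sum_congr rfl fun W _ => hbases W, sum_const,
    smul_eq_mul, card_linearIndependent hk] at hcount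
  rw [Nat.card_eq_fintype_card, prod_range fun i => Fintype.card K ^ finrank K V - _]
  exact hcount

theorem natCard_submodule_finrank_eq_lt_four_mul_pow (hk : k ≤ finrank K V) :
    Nat.card {W : Submodule K V // finrank K W = k} <
      4 * Fintype.card K ^ (k * (finrank K V - k)) := by
  set q := Fintype.card K
  set n := finrank K V
  set P := ∏ i ∈ range k, (q ^ k - q ^ i)
  have hP : q ^ (k * k) < 4 * P :=
    pow_mul_self_lt_four_mul_prod_pow_sub_pow Fintype.one_lt_card k
  refine lt_of_mul_lt_mul_right' (a := P) ?_
  calc Nat.card {W : Submodule K V // finrank K W = k} * P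
      = ∏ i ∈ range k, (q ^ n - q ^ i) := natCard_submodule_finrank_eq_mul_prod K V hk
    _ ≤ (q ^ n) ^ k := by
        simpa using prod_le_pow_card (range k) _ (q ^ n) fun i _ => Nat.sub_le _ (q ^ i)
    _ = q ^ (k * (n - k)) * q ^ (k * k) := by
        rw [← pow_mul, ← pow_add, ← mul_add, Nat.sub_add_cancel hk, mul_comm]
    _ < q ^ (k * (n - k)) * (4 * P) := by gcongr
    _ = 4 * q ^ (k * (n - k)) * P := by ring

end Counting

theorem stmt_17_general (F : Type) [Field F] [Fintype F] (k n : ℕ) (hkn : 2 * k + 3 ≤ n) :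
    gauss F n k < Fintype.card F ^ ((n - k - 1) * (k + 1)) := by
  have hdim : finrank F (Fin n → F) = n := finrank_fin_fun F
  have hcard : 2 ≤ Fintype.card F := Fintype.one_lt_card
  have hexp : 2 + k * (n - k) ≤ (n - k - 1) * (k + 1) := by
    obtain ⟨d, rfl⟩ := Nat.exists_eq_add_of_le hkn
    rw [show 2 * k + 3 + d - k = k + 3 + d by lia, show k + 3 + d - 1 = k + 2 + d by lia]
    calc 2 + k * (k + 3 + d) ≤ 2 + k * (k + 3 + d) + d := Nat.le_add_right _ _
      _ = (k + 2 + d) * (k + 1) := by ring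
  calc gauss F n k
      < 4 * Fintype.card F ^ (k * (n - k)) := by
        simpa only [gauss, hdim] using
          natCard_submodule_finrank_eq_lt_four_mul_pow F (Fin n → F) (k := k) (by lia)
    _ ≤ Fintype.card F ^ 2 * Fintype.card F ^ (k * (n - k)) := by
        gcongr
        exact Nat.pow_le_pow_left hcard 2
    _ = Fintype.card F ^ (2 + k * (n - k)) := (pow_add _ _ _).symm
    _ ≤ Fintype.card F ^ ((n - k - 1) * (k + 1)) := by gcongr; lia

/-- For `q = 2` and integers `0 ≤ k ≤ (n-3)/2` (i.e. `2k + 3 ≤ n`),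
the Gaussian binomial coefficient satisfies `C(n,k)_2 < 2^((n-k-1)(k+1))`. -/
theorem stmt_17 (k n : ℕ) (hkn : 2 * k + 3 ≤ n) :
    gauss (ZMod 2) n k < 2 ^ ((n - k - 1) * (k + 1)) := by
  simpa only [ZMod.card] using stmt_17_general (ZMod 2) k n hkn
end
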